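/- arXiv:1411.5033 — 3 statements merged into one kernel-verified Lean document; each statement's English description precedes it below -/
import Mathlib

section
/- For every t ≥ 0 one has the exact energy balance ‖u(t,·)‖²_{L²(ℝ)} + β‖∂ₓu(t,·)‖²_{L²(ℝ)} + 2ε∫₀ᵗ‖∂ₓu(s,·)‖²_{L²(ℝ)} ds + 2βε∫₀ᵗ‖∂ₓ²u(s,·)‖²_{L²(ℝ)} ds = ‖u(0,·)‖²_{L²(ℝ)} + β‖∂ₓu(0,·)‖²_{L²(ℝ)}. -/
open MeasureTheory

/-!
Multiply the equation `∂ₜu + L u = 0` by `2 (u - β ∂ₓ²u)` and integrate over `x`. Integrating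
`∂ₓ²u ∂ₜu` by parts and using `∂ₓ∂ₜu = ∂ₜ∂ₓu` turns the first term into the time derivative of the
energy `‖u‖² + β ‖∂ₓu‖²`. The second is an exact `x`-derivative, plus the dissipation
`2 ε (∂ₓu)² + 2 β ε (∂ₓ²u)²`, plus multiples of `(A - B + C) (∂ₓu)³` and `(B + 2 C) ∂ₓu (∂ₓ²u)²`;
both extra terms vanish precisely for `B = 2A/3`, `C = -A/3`.
-/

open Function Set Topology

section PartialDerivatives

variable {𝕜 E F : Type*} [NontriviallyNormedField 𝕜] [NormedAddCommGroup E] [NormedSpace 𝕜 E]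
  [NormedAddCommGroup F] [NormedSpace 𝕜 F] {n : WithTop ℕ∞}

theorem hasDerivAt_prodMk_left {f : 𝕜 × E → F} {t : 𝕜} {x : E}
    (hf : DifferentiableAt 𝕜 f (t, x)) :
    HasDerivAt (fun τ => f (τ, x)) (fderiv 𝕜 f (t, x) (1, 0)) t :=
  hf.hasFDerivAt.comp_hasDerivAt (f := fun τ => (τ, x)) t
    ((hasDerivAt_id t).prodMk (hasDerivAt_const t x))

theorem hasDerivAt_prodMk_right {f : E × 𝕜 → F} {t : E} {x : 𝕜}
    (hf : DifferentiableAt 𝕜 f (t, x)) :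
    HasDerivAt (fun y => f (t, y)) (fderiv 𝕜 f (t, x) (0, 1)) x :=
  hf.hasFDerivAt.comp_hasDerivAt (f := fun y => (t, y)) x
    ((hasDerivAt_const x t).prodMk (hasDerivAt_id x))

theorem contDiff_uncurry_deriv_left {u : 𝕜 → E → F} (hu : ContDiff 𝕜 (n + 1) (uncurry u)) :
    ContDiff 𝕜 n (uncurry fun t x => deriv (fun τ => u τ x) t) := by
  have hpartial : (uncurry fun t x => deriv (fun τ => u τ x) t) =
      fun p => fderiv 𝕜 (uncurry u) p (1, 0) :=
    funext fun p => (hasDerivAt_prodMk_left (hu.differentiable (by simp) p)).deriv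
  exact hpartial ▸ (hu.fderiv_right le_rfl).clm_apply contDiff_const

theorem contDiff_uncurry_deriv_right {u : E → 𝕜 → F} (hu : ContDiff 𝕜 (n + 1) (uncurry u)) :
    ContDiff 𝕜 n (uncurry fun t => deriv (u t)) := by
  have hpartial : (uncurry fun t => deriv (u t)) = fun p => fderiv 𝕜 (uncurry u) p (0, 1) :=
    funext fun p => (hasDerivAt_prodMk_right (hu.differentiable (by simp) p)).deriv
  exact hpartial ▸ (hu.fderiv_right le_rfl).clm_apply contDiff_const

theorem deriv_deriv_comm [IsRCLikeNormedField 𝕜] {u : 𝕜 → 𝕜 → F}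
    (hu : ContDiff 𝕜 2 (uncurry u)) (t x : 𝕜) :
    deriv (fun τ => deriv (u τ) x) t = deriv (fun y => deriv (fun τ => u τ y) t) x := by
  have hdiff : Differentiable 𝕜 (uncurry u) := hu.differentiable two_ne_zero
  have hdiff' : DifferentiableAt 𝕜 (fderiv 𝕜 (uncurry u)) (t, x) :=
    (hu.fderiv_right (m := 1) le_rfl).differentiable one_ne_zero _
  have hfderiv (v w : 𝕜 × 𝕜) : fderiv 𝕜 (fun p => fderiv 𝕜 (uncurry u) p v) (t, x) w =
      fderiv 𝕜 (fderiv 𝕜 (uncurry u)) (t, x) w v := by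
    simp [fderiv_clm_apply hdiff' (differentiableAt_const v)]
  have hright (τ : 𝕜) : deriv (u τ) x = fderiv 𝕜 (uncurry u) (τ, x) (0, 1) :=
    (hasDerivAt_prodMk_right (hdiff (τ, x))).deriv
  have hleft (y : 𝕜) : deriv (fun τ => u τ y) t = fderiv 𝕜 (uncurry u) (t, y) (1, 0) :=
    (hasDerivAt_prodMk_left (hdiff (t, y))).deriv
  have hsymm : IsSymmSndFDerivAt 𝕜 (uncurry u) (t, x) :=
    hu.contDiffAt.isSymmSndFDerivAt minSmoothness_of_isRCLikeNormedField.le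
  simp only [hright, hleft]
  rw [(hasDerivAt_prodMk_left (hdiff'.clm_apply (differentiableAt_const _))).deriv,
    (hasDerivAt_prodMk_right (hdiff'.clm_apply (differentiableAt_const _))).deriv,
    hfderiv, hfderiv, hsymm.eq]

end PartialDerivatives

section CompactSupport

theorem deriv_eq_zero_of_notMem_isClosed {𝕜 F : Type*} [NontriviallyNormedField 𝕜]
    [NormedAddCommGroup F] [NormedSpace 𝕜 F] {f : 𝕜 → F} {K : Set 𝕜} (hK : IsClosed K)
    (hf : ∀ x ∉ K, f x = 0) : ∀ x ∉ K, deriv f x = 0 := by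
  have htsupport : tsupport f ⊆ K :=
    closure_minimal (support_subset_iff'.2 hf) hK
  exact fun x hx => notMem_support.1 fun h => hx (htsupport (support_deriv_subset h))

theorem hasDerivAt_integral_of_compact_support {X E : Type*} [TopologicalSpace X] [T2Space X]
    [MeasurableSpace X] [OpensMeasurableSpace X] {μ : Measure X} [IsFiniteMeasureOnCompacts μ]
    [NormedAddCommGroup E] [NormedSpace ℝ E] {f f' : ℝ → X → E}
    {U : Set ℝ} {K : Set X} {t : ℝ} (hU : U ∈ 𝓝 t) (hK : IsCompact K)
    (hf : ∀ s ∈ U, Continuous (f s)) (hf' : Continuous (uncurry f'))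
    (hderiv : ∀ s ∈ U, ∀ x, HasDerivAt (f · x) (f' s x) s)
    (hsupp : ∀ s ∈ U, ∀ x ∉ K, f s x = 0) :
    HasDerivAt (fun s => ∫ x, f s x ∂μ) (∫ x, f' t x ∂μ) t := by
  obtain ⟨r, hr, hrU⟩ := Metric.nhds_basis_closedBall.mem_iff.1 hU
  have hballU : Metric.ball t r ⊆ U := Metric.ball_subset_closedBall.trans hrU
  have hint (s) (hs : s ∈ U) : Integrable (f s) μ :=
    (hf s hs).integrable_of_hasCompactSupport (.intro hK (hsupp s hs))
  have hsupp' (s) (hs : s ∈ Metric.ball t r) (x) (hx : x ∉ K) : f' s x = 0 := by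
    have hzero : (f · x) =ᶠ[𝓝 s] fun _ => 0 := by
      filter_upwards [Metric.isOpen_ball.mem_nhds hs] with τ hτ using hsupp τ (hballU hτ) x hx
    rw [← (hderiv s (hballU hs) x).deriv, hzero.deriv_eq, deriv_const]
  have hint' : Integrable (f' t) μ :=
    (hf'.comp (.prodMk_right t)).integrable_of_hasCompactSupport
      (.intro hK (hsupp' t (Metric.mem_ball_self hr)))
  obtain ⟨C, hC⟩ := ((isCompact_closedBall t r).prod hK).exists_bound_of_continuousOn
    hf'.continuousOn
  have hbound (x) (s) (hs : s ∈ Metric.ball t r) : ‖f' s x‖ ≤ K.indicator (fun _ => C) x := by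
    by_cases hx : x ∈ K
    · simpa [hx] using hC (s, x) ⟨Metric.ball_subset_closedBall hs, hx⟩
    · simp [hx, hsupp' s hs x hx]
  exact (hasDerivAt_integral_of_dominated_loc_of_deriv_le (Metric.ball_mem_nhds t hr)
    (Filter.eventually_of_mem hU fun s hs => (hint s hs).aestronglyMeasurable)
    (hint t (mem_of_mem_nhds hU)) hint'.aestronglyMeasurable (.of_forall hbound)
    ((integrable_indicator_iff hK.measurableSet).2 (integrableOn_const hK.measure_ne_top))
    (.of_forall fun x s hs => hderiv s (hballU hs) x)).2

theorem integrable_pow_of_hasCompactSupport {X R : Type*} [TopologicalSpace X] [MeasurableSpace X]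
    [OpensMeasurableSpace X] {μ : Measure X} [IsFiniteMeasureOnCompacts μ] [NormedRing R]
    {f : X → R} {n : ℕ} (hf : Continuous f) (hsupp : HasCompactSupport f) (hn : n ≠ 0) :
    Integrable (fun x => f x ^ n) μ :=
  (hf.pow n).integrable_of_hasCompactSupport (hsupp.comp_left (g := (· ^ n)) (zero_pow hn))

theorem integral_deriv_eq_zero_of_hasCompactSupport {E : Type*} [NormedAddCommGroup E]
    [NormedSpace ℝ E] {f : ℝ → E} (hf : ContDiff ℝ 1 f) (hsupp : HasCompactSupport f) :
    ∫ x, deriv f x = 0 :=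
  integral_eq_zero_of_hasDerivAt_of_integrable
    (fun x => (hf.differentiable one_ne_zero x).hasDerivAt)
    ((hf.continuous_deriv le_rfl).integrable_of_hasCompactSupport hsupp.deriv)
    (hf.continuous.integrable_of_hasCompactSupport hsupp)

theorem integral_mul_deriv_of_hasCompactSupport {f g : ℝ → ℝ} (hf : ContDiff ℝ 1 f)
    (hg : ContDiff ℝ 1 g) (hsupp : HasCompactSupport f) :
    ∫ x, f x * deriv g x = -∫ x, deriv f x * g x :=
  integral_mul_deriv_eq_deriv_mul_of_integrable
    (fun x _ => (hf.differentiable one_ne_zero x).hasDerivAt)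
    (fun x _ => (hg.differentiable one_ne_zero x).hasDerivAt)
    ((hf.continuous.mul (hg.continuous_deriv le_rfl)).integrable_of_hasCompactSupport
      hsupp.mul_right)
    (((hf.continuous_deriv le_rfl).mul hg.continuous).integrable_of_hasCompactSupport
      hsupp.deriv.mul_right)
    ((hf.continuous.mul hg.continuous).integrable_of_hasCompactSupport hsupp.mul_right)

theorem hasDerivAt_integral_sq_of_compact_support {X : Type*} [NormedAddCommGroup X]
    [NormedSpace ℝ X] [MeasurableSpace X] [OpensMeasurableSpace X] {μ : Measure X}
    [IsFiniteMeasureOnCompacts μ] {w : ℝ → X → ℝ} {U : Set ℝ} {K : Set X} {t : ℝ}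
    (hw : ContDiff ℝ 1 (uncurry w)) (hU : U ∈ 𝓝 t) (hK : IsCompact K)
    (hsupp : ∀ s ∈ U, ∀ x ∉ K, w s x = 0) :
    HasDerivAt (fun s => ∫ x, w s x ^ 2 ∂μ)
      (2 * ∫ x, w t x * deriv (fun τ => w τ x) t ∂μ) t := by
  rw [← integral_const_mul]
  have hw_cont : Continuous (uncurry w) := hw.continuous
  have hw_t : Continuous (uncurry fun s x => deriv (fun τ => w τ x) s) :=
    (contDiff_uncurry_deriv_left (n := 0) hw).continuous
  refine hasDerivAt_integral_of_compact_support
    (f' := fun s x => 2 * (w s x * deriv (fun τ => w τ x) s)) hU hK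
    (fun s _ => (hw_cont.comp (.prodMk_right s)).pow 2)
    ((hw_cont.mul hw_t).const_mul 2) (fun s _ x => ?_) (fun s hs x hx => by simp [hsupp s hs x hx])
  have hw_at : DifferentiableAt ℝ (fun τ => w τ x) s :=
    (hw.comp (contDiff_prodMk_left x)).differentiable one_ne_zero s
  simpa [mul_assoc] using hw_at.hasDerivAt.fun_pow 2

theorem intervalIntegrable_integral_of_compact_support {X E : Type*} [TopologicalSpace X]
    [MeasurableSpace X] [OpensMeasurableSpace X] {μ : Measure X} [IsFiniteMeasureOnCompacts μ]
    [NormedAddCommGroup E] [NormedSpace ℝ E] {f : ℝ → X → E} {K : Set X} {a b : ℝ}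
    (hf : Continuous (uncurry f)) (hK : IsCompact K)
    (hsupp : ∀ s ∈ uIcc a b, ∀ x ∉ K, f s x = 0) :
    IntervalIntegrable (fun s => ∫ x, f s x ∂μ) volume a b :=
  (continuousOn_integral_of_compact_support hK hf.continuousOn
    fun s x hs hx => hsupp s hs x hx).intervalIntegrable

end CompactSupport

section Energy

/-- The energy `‖v‖² + β ‖∂ₓv‖²`, in `L²` norms, of a profile `v`. -/
noncomputable def energy (β : ℝ) (v : ℝ → ℝ) : ℝ :=
  (∫ x, v x ^ 2) + β * ∫ x, deriv v x ^ 2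

variable {β : ℝ} {u : ℝ → ℝ → ℝ} {K : Set ℝ}

theorem continuousOn_energy {S : Set ℝ} (hu : ContDiff ℝ 1 (uncurry u)) (hK : IsCompact K)
    (hsupp : ∀ s ∈ S, ∀ x ∉ K, u s x = 0) : ContinuousOn (fun s => energy β (u s)) S := by
  have hu_x : Continuous (uncurry fun s => deriv (u s)) :=
    (contDiff_uncurry_deriv_right (n := 0) hu).continuous
  have hsupp_x (s) (hs : s ∈ S) := deriv_eq_zero_of_notMem_isClosed hK.isClosed (hsupp s hs)
  have hsq : ContinuousOn (fun s => ∫ x, u s x ^ 2) S :=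
    continuousOn_integral_of_compact_support hK (hu.continuous.pow 2).continuousOn
      fun s x hs hx => by simp [hsupp s hs x hx]
  have hsq_x : ContinuousOn (fun s => ∫ x, deriv (u s) x ^ 2) S :=
    continuousOn_integral_of_compact_support hK (hu_x.pow 2).continuousOn
      fun s x hs hx => by simp [hsupp_x s hs x hx]
  exact hsq.add (hsq_x.const_mul β)

theorem hasDerivAt_energy {U : Set ℝ} {t : ℝ} (hu : ContDiff ℝ 2 (uncurry u)) (hU : U ∈ 𝓝 t)
    (hK : IsCompact K) (hsupp : ∀ s ∈ U, ∀ x ∉ K, u s x = 0) :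
    HasDerivAt (fun s => energy β (u s))
      (2 * ∫ x, (u t x - β * deriv (deriv (u t)) x) * deriv (fun τ => u τ x) t) t := by
  have hu_x : ContDiff ℝ 1 (uncurry fun s => deriv (u s)) :=
    contDiff_uncurry_deriv_right (n := 1) hu
  have hslice_x : ContDiff ℝ 1 (deriv (u t)) := hu_x.comp (contDiff_prodMk_right t)
  have hslice_t : ContDiff ℝ 1 (fun x => deriv (fun τ => u τ x) t) :=
    (contDiff_uncurry_deriv_left (n := 1) hu).comp (contDiff_prodMk_right t)
  have hcompact : HasCompactSupport (u t) := .intro hK (hsupp t (mem_of_mem_nhds hU))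
  have hsq := hasDerivAt_integral_sq_of_compact_support (μ := volume) (hu.of_le one_le_two) hU hK
    hsupp
  have hsq_x := hasDerivAt_integral_sq_of_compact_support (μ := volume) hu_x hU hK
    fun s hs => deriv_eq_zero_of_notMem_isClosed hK.isClosed (hsupp s hs)
  have hparts : ∫ x, deriv (u t) x * deriv (fun τ => deriv (u τ) x) t =
      -∫ x, deriv (deriv (u t)) x * deriv (fun τ => u τ x) t := by
    simp only [deriv_deriv_comm hu]
    exact integral_mul_deriv_of_hasCompactSupport hslice_x hslice_t hcompact.deriv
  have hint : Integrable (fun x => u t x * deriv (fun τ => u τ x) t) :=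
    ((hu.continuous.comp (.prodMk_right t)).mul hslice_t.continuous).integrable_of_hasCompactSupport
      hcompact.mul_right
  have hint_xx : Integrable (fun x => deriv (deriv (u t)) x * deriv (fun τ => u τ x) t) :=
    ((hslice_x.continuous_deriv le_rfl).mul hslice_t.continuous).integrable_of_hasCompactSupport
      hcompact.deriv.deriv.mul_right
  refine (hsq.add (hsq_x.const_mul β)).congr_deriv ?_
  simp only [sub_mul, mul_assoc]
  rw [integral_sub hint (hint_xx.const_mul β), integral_const_mul, hparts]
  ring

theorem energy_sub_energy {a b : ℝ} (hab : a ≤ b) (hu : ContDiff ℝ 2 (uncurry u))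
    (hK : IsCompact K) (hsupp : ∀ s ∈ Icc a b, ∀ x ∉ K, u s x = 0) :
    energy β (u b) - energy β (u a) =
      2 * ∫ s in a..b, ∫ x, (u s x - β * deriv (deriv (u s)) x) * deriv (fun τ => u τ x) s := by
  have hu_t : Continuous (uncurry fun s x => deriv (fun τ => u τ x) s) :=
    (contDiff_uncurry_deriv_left (n := 1) hu).continuous
  have hu_xx : Continuous (uncurry fun s => deriv (deriv (u s))) :=
    (contDiff_uncurry_deriv_right (n := 0) (contDiff_uncurry_deriv_right (n := 1) hu)).continuous
  have hint : IntervalIntegrable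
      (fun s => ∫ x, (u s x - β * deriv (deriv (u s)) x) * deriv (fun τ => u τ x) s)
      volume a b := by
    refine intervalIntegrable_integral_of_compact_support
      ((hu.continuous.sub (hu_xx.const_mul β)).mul hu_t) hK fun s hs x hx => ?_
    rw [uIcc_of_le hab] at hs
    have hsupp_x := deriv_eq_zero_of_notMem_isClosed hK.isClosed (hsupp s hs)
    have hsupp_xx := deriv_eq_zero_of_notMem_isClosed hK.isClosed hsupp_x
    simp [hsupp s hs x hx, hsupp_xx x hx]
  rw [← intervalIntegral.integral_const_mul]
  exact (intervalIntegral.integral_eq_sub_of_hasDerivAt_of_le hab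
    (continuousOn_energy (hu.of_le one_le_two) hK hsupp)
    (fun s hs => hasDerivAt_energy hu (Icc_mem_nhds hs.1 hs.2) hK hsupp) (hint.const_mul 2)).symm

end Energy

section KudryashovSinelshchikov

/-- The spatial part of the Kudryashov–Sinelshchikov equation (with `D = 0`): the equation reads
`∂ₜu + ksOperator A B C β ε u = 0`. -/
noncomputable def ksOperator (A B C β ε : ℝ) (v : ℝ → ℝ) (x : ℝ) : ℝ :=
  A * v x * deriv v x + β * deriv (deriv (deriv v)) x
    - B * β * deriv (fun y => v y * deriv (deriv v) y) x
    - C * β * deriv v x * deriv (deriv v) x - ε * deriv (deriv v) x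

/-- The flux whose derivative is the part of `(v - β ∂ₓ²v) * ksOperator A B C β ε v` that integrates
to zero; what remains integrates to `ksDissipation`. -/
noncomputable def ksFlux (A B C β ε : ℝ) (v : ℝ → ℝ) (x : ℝ) : ℝ :=
  A / 3 * v x ^ 3 + β * (v x * deriv (deriv v) x - deriv v x ^ 2 / 2)
    - B * β * (v x ^ 2 * deriv (deriv v) x) + (B - C - A) * β / 2 * (v x * deriv v x ^ 2)
    - ε * (v x * deriv v x) - β ^ 2 / 2 * deriv (deriv v) x ^ 2
    + B * β ^ 2 / 2 * (v x * deriv (deriv v) x ^ 2)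

/-- The rate at which the evolution `∂ₜu + ksOperator A B C β ε u = 0` dissipates half of `energy`.
The last two terms vanish for the energy-preserving choice `B = 2A/3`, `C = -A/3`. -/
noncomputable def ksDissipation (A B C β ε : ℝ) (v : ℝ → ℝ) : ℝ :=
  ε * (∫ x, deriv v x ^ 2) + β * ε * (∫ x, deriv (deriv v) x ^ 2)
    + β * (A - B + C) / 2 * (∫ x, deriv v x ^ 3)
    + β ^ 2 * (B + 2 * C) / 2 * ∫ x, deriv v x * deriv (deriv v) x ^ 2

variable {A B C β ε : ℝ} {v : ℝ → ℝ}

theorem contDiff_ksFlux (hv : ContDiff ℝ 3 v) : ContDiff ℝ 1 (ksFlux A B C β ε v) := by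
  have hv₀ : ContDiff ℝ 1 v := hv.of_le (by norm_num)
  have hv₁ : ContDiff ℝ 1 (deriv v) := (hv.deriv' (n := 2)).of_le one_le_two
  unfold ksFlux
  fun_prop

theorem hasCompactSupport_ksFlux (hv : HasCompactSupport v) :
    HasCompactSupport (ksFlux A B C β ε v) := by
  refine .intro hv fun x hx => ?_
  have hv₁ := deriv_eq_zero_of_notMem_isClosed (isClosed_tsupport v)
    fun _ => image_eq_zero_of_notMem_tsupport
  have hv₂ := deriv_eq_zero_of_notMem_isClosed (isClosed_tsupport v) hv₁
  simp [ksFlux, image_eq_zero_of_notMem_tsupport hx, hv₁ x hx, hv₂ x hx]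

theorem mul_ksOperator_eq (hv : ContDiff ℝ 3 v) (x : ℝ) :
    (v x - β * deriv (deriv v) x) * ksOperator A B C β ε v x =
      deriv (ksFlux A B C β ε v) x + (ε * deriv v x ^ 2 + β * ε * deriv (deriv v) x ^ 2
        + β * (A - B + C) / 2 * deriv v x ^ 3
        + β ^ 2 * (B + 2 * C) / 2 * (deriv v x * deriv (deriv v) x ^ 2)) := by
  have hv₁ : ContDiff ℝ 2 (deriv v) := hv.deriv' (n := 2)
  have h₀ := (hv.differentiable three_ne_zero x).hasDerivAt
  have h₁ := (hv₁.differentiable two_ne_zero x).hasDerivAt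
  have h₂ := ((hv₁.deriv' (n := 1)).differentiable one_ne_zero x).hasDerivAt
  have hflux := (((((((h₀.fun_pow 3).const_mul (A / 3)).add
    (((h₀.mul h₂).sub ((h₁.fun_pow 2).div_const 2)).const_mul β)).sub
    (((h₀.fun_pow 2).mul h₂).const_mul (B * β))).add
    ((h₀.mul (h₁.fun_pow 2)).const_mul ((B - C - A) * β / 2))).sub
    ((h₀.mul h₁).const_mul ε)).sub
    ((h₂.fun_pow 2).const_mul (β ^ 2 / 2))).add
    ((h₀.mul (h₂.fun_pow 2)).const_mul (B * β ^ 2 / 2))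
  have hflux' : deriv (ksFlux A B C β ε v) x = _ := hflux.deriv
  have hprod : deriv (fun y => v y * deriv (deriv v) y) x = _ := (h₀.mul h₂).deriv
  rw [ksOperator, hprod, hflux']
  ring

theorem integral_mul_ksOperator (hv : ContDiff ℝ 3 v) (hsupp : HasCompactSupport v) :
    ∫ x, (v x - β * deriv (deriv v) x) * ksOperator A B C β ε v x = ksDissipation A B C β ε v := by
  have hv₁ : ContDiff ℝ 2 (deriv v) := hv.deriv' (n := 2)
  have hv₂ : Continuous (deriv (deriv v)) := hv₁.continuous_deriv one_le_two
  have hflux : Integrable (deriv (ksFlux A B C β ε v)) :=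
    ((contDiff_ksFlux hv).continuous_deriv le_rfl).integrable_of_hasCompactSupport
      (hasCompactSupport_ksFlux hsupp).deriv
  have hsq₁ : Integrable (fun x => deriv v x ^ 2) :=
    integrable_pow_of_hasCompactSupport hv₁.continuous hsupp.deriv two_ne_zero
  have hsq₂ : Integrable (fun x => deriv (deriv v) x ^ 2) :=
    integrable_pow_of_hasCompactSupport hv₂ hsupp.deriv.deriv two_ne_zero
  have hcube : Integrable (fun x => deriv v x ^ 3) :=
    integrable_pow_of_hasCompactSupport hv₁.continuous hsupp.deriv three_ne_zero
  have hmixed : Integrable (fun x => deriv v x * deriv (deriv v) x ^ 2) :=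
    (hv₁.continuous.mul (hv₂.pow 2)).integrable_of_hasCompactSupport hsupp.deriv.mul_right
  have hdissip := (hsq₁.const_mul ε).fun_add (hsq₂.const_mul (β * ε))
  have hdissip_cube := hdissip.fun_add (hcube.const_mul (β * (A - B + C) / 2))
  simp only [mul_ksOperator_eq hv]
  rw [integral_add hflux (hdissip_cube.fun_add (hmixed.const_mul _)),
    integral_add hdissip_cube (hmixed.const_mul _), integral_add hdissip (hcube.const_mul _),
    integral_add (hsq₁.const_mul _) (hsq₂.const_mul _),
    integral_deriv_eq_zero_of_hasCompactSupport (contDiff_ksFlux hv)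
      (hasCompactSupport_ksFlux hsupp), zero_add]
  simp only [integral_const_mul, ksDissipation]

theorem intervalIntegral_ksDissipation {u : ℝ → ℝ → ℝ} {K : Set ℝ} {a b : ℝ}
    (hu : ContDiff ℝ 2 (uncurry u)) (hK : IsCompact K)
    (hsupp : ∀ s ∈ uIcc a b, ∀ x ∉ K, u s x = 0) :
    ∫ s in a..b, ksDissipation A B C β ε (u s) =
      ε * (∫ s in a..b, ∫ x, deriv (u s) x ^ 2)
        + β * ε * (∫ s in a..b, ∫ x, deriv (deriv (u s)) x ^ 2)
        + β * (A - B + C) / 2 * (∫ s in a..b, ∫ x, deriv (u s) x ^ 3)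
        + β ^ 2 * (B + 2 * C) / 2 *
          ∫ s in a..b, ∫ x, deriv (u s) x * deriv (deriv (u s)) x ^ 2 := by
  have hu_x : ContDiff ℝ 1 (uncurry fun s => deriv (u s)) :=
    contDiff_uncurry_deriv_right (n := 1) hu
  have hu_xx : Continuous (uncurry fun s => deriv (deriv (u s))) :=
    (contDiff_uncurry_deriv_right (n := 0) hu_x).continuous
  have hsupp_x (s) (hs : s ∈ uIcc a b) :=
    deriv_eq_zero_of_notMem_isClosed hK.isClosed (hsupp s hs)
  have hsupp_xx (s) (hs : s ∈ uIcc a b) :=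
    deriv_eq_zero_of_notMem_isClosed hK.isClosed (hsupp_x s hs)
  have hsq₁ : IntervalIntegrable (fun s => ∫ x, deriv (u s) x ^ 2) volume a b :=
    intervalIntegrable_integral_of_compact_support (hu_x.continuous.pow 2) hK
      fun s hs x hx => by simp [hsupp_x s hs x hx]
  have hsq₂ : IntervalIntegrable (fun s => ∫ x, deriv (deriv (u s)) x ^ 2) volume a b :=
    intervalIntegrable_integral_of_compact_support (hu_xx.pow 2) hK
      fun s hs x hx => by simp [hsupp_xx s hs x hx]
  have hcube : IntervalIntegrable (fun s => ∫ x, deriv (u s) x ^ 3) volume a b :=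
    intervalIntegrable_integral_of_compact_support (hu_x.continuous.pow 3) hK
      fun s hs x hx => by simp [hsupp_x s hs x hx]
  have hmixed : IntervalIntegrable
      (fun s => ∫ x, deriv (u s) x * deriv (deriv (u s)) x ^ 2) volume a b :=
    intervalIntegrable_integral_of_compact_support (hu_x.continuous.mul (hu_xx.pow 2)) hK
      fun s hs x hx => by simp [hsupp_x s hs x hx]
  have hdissip := (hsq₁.const_mul ε).add (hsq₂.const_mul (β * ε))
  unfold ksDissipation
  rw [intervalIntegral.integral_add (hdissip.add (hcube.const_mul _)) (hmixed.const_mul _),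
    intervalIntegral.integral_add hdissip (hcube.const_mul _),
    intervalIntegral.integral_add (hsq₁.const_mul _) (hsq₂.const_mul _)]
  simp only [intervalIntegral.integral_const_mul]

end KudryashovSinelshchikov

theorem stmt_0_general {A B C β ε T : ℝ} {u : ℝ → ℝ → ℝ} {K : Set ℝ} (hT : 0 ≤ T)
    (hu : ContDiff ℝ 3 (uncurry u)) (hK : IsCompact K)
    (hsupp : ∀ t ∈ Icc 0 T, ∀ x ∉ K, u t x = 0)
    (hPDE : ∀ t ∈ Icc 0 T, ∀ x,
      deriv (fun τ => u τ x) t + ksOperator A B C β ε (u t) x = 0) :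
    energy β (u T) + 2 * ε * (∫ s in 0..T, ∫ x, deriv (u s) x ^ 2)
      + 2 * β * ε * (∫ s in 0..T, ∫ x, deriv (deriv (u s)) x ^ 2)
      + β * (A - B + C) * (∫ s in 0..T, ∫ x, deriv (u s) x ^ 3)
      + β ^ 2 * (B + 2 * C) * (∫ s in 0..T, ∫ x, deriv (u s) x * deriv (deriv (u s)) x ^ 2)
    = energy β (u 0) := by
  rw [← uIcc_of_le hT] at hPDE
  have hu₂ : ContDiff ℝ 2 (uncurry u) := hu.of_le (by norm_num)
  have hrate (s) (hs : s ∈ uIcc 0 T) :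
      ∫ x, (u s x - β * deriv (deriv (u s)) x) * deriv (fun τ => u τ x) s =
        -ksDissipation A B C β ε (u s) := by
    have hslice : ContDiff ℝ 3 (u s) := hu.comp (contDiff_prodMk_right s)
    simp only [eq_neg_of_add_eq_zero_left (hPDE s hs _), mul_neg, integral_neg]
    rw [integral_mul_ksOperator hslice (.intro hK (hsupp s (uIcc_of_le hT ▸ hs)))]
  have hbalance := energy_sub_energy (β := β) hT hu₂ hK hsupp
  rw [intervalIntegral.integral_congr hrate, intervalIntegral.integral_neg,
    intervalIntegral_ksDissipation hu₂ hK (uIcc_of_le hT ▸ hsupp)] at hbalance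
  linear_combination hbalance

/-- Energy balance for the Kudryashov–Sinelshchikov equation with the
energy-preserving parameter choice `B = 2A/3`, `C = -A/3`. -/
theorem stmt_0
    (A ε β : ℝ) (hA : A ≠ 0) (hε : 0 < ε) (hβ : 0 < β)
    (u : ℝ → ℝ → ℝ)
    (hu : ContDiff ℝ (⊤ : ℕ∞) (Function.uncurry u))
    (hsupp : ∃ R > (0:ℝ), ∀ t x : ℝ, R ≤ |x| → u t x = 0)
    (hPDE : ∀ t : ℝ, 0 ≤ t → ∀ x : ℝ,
      deriv (fun τ => u τ x) t
        + A * u t x * deriv (u t) x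
        + β * deriv (deriv (deriv (u t))) x
        - (2 * A / 3) * β * deriv (fun y => u t y * deriv (deriv (u t)) y) x
        - (-(A / 3)) * β * deriv (u t) x * deriv (deriv (u t)) x
        - ε * deriv (deriv (u t)) x = 0) :
    ∀ t : ℝ, 0 ≤ t →
      (∫ x : ℝ, (u t x) ^ 2) + β * (∫ x : ℝ, (deriv (u t) x) ^ 2)
        + 2 * ε * (∫ s in (0:ℝ)..t, ∫ x : ℝ, (deriv (u s) x) ^ 2)
        + 2 * β * ε * (∫ s in (0:ℝ)..t, ∫ x : ℝ, (deriv (deriv (u s)) x) ^ 2)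
      = (∫ x : ℝ, (u 0 x) ^ 2) + β * (∫ x : ℝ, (deriv (u 0) x) ^ 2) := by
  intro t ht
  obtain ⟨R, -, hsupp⟩ := hsupp
  have hbalance := stmt_0_general (A := A) (B := 2 * A / 3) (C := -(A / 3)) (β := β) (ε := ε) ht
    (hu.of_le (WithTop.coe_le_coe.2 le_top)) (isCompact_Icc (a := -R) (b := R))
    (fun s _ x hx => hsupp s x (not_le.1 fun h => hx (abs_le.1 h)).le)
    (fun s hs x => by rw [ksOperator]; linear_combination hPDE s hs.1 x)
  unfold energy at hbalance
  linear_combination hbalance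
end

section
/- Let f : ℝ → ℝ be a smooth function with compact support and let A, B, C, β, ε be real numbers. Then ∫_ℝ (f − β f'') · (A f f' + β f''' − Bβ (f f'')' − Cβ f' f'' − ε f'') dx = −β(A − B + C) ∫_ℝ f f' f'' dx + (β²/2)(B + 2C) ∫_ℝ f' (f'')² dx + ε ∫_ℝ (f')² dx + βε ∫_ℝ (f'')² dx. In particular, if B = 2A/3 and C = −A/3 (so that A − B + C = 0 and B + 2C = 0), the first two terms on the right-hand side vanish. -/
open MeasureTheory

/-!
Multiplying the spatial operator by `u = f - β f''` gives a linear combination of the pairings of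
`u` with `f f'`, `f'''`, `(f f'')'`, `f' f''` and `f''`. Besides plain integration by parts,
computing these takes two observations: `φⁿ φ'` is the derivative of `φⁿ⁺¹ / (n + 1)` and integrates
to zero, and `∫ f'' (f f'')'` equals both `-∫ f f'' f'''` and `∫ f' (f'')² + ∫ f f'' f'''`, hence is
`½ ∫ f' (f'')²`.
-/

section CompactSupport

variable {R : Type*}

lemma integrable_mul_of_hasCompactSupport_left {X : Type*} [TopologicalSpace X] [MeasurableSpace X]
    [OpensMeasurableSpace X] {μ : Measure X} [IsFiniteMeasureOnCompacts μ] [NormedRing R]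
    {u v : X → R} (hu : Continuous u) (hv : Continuous v) (hsupp : HasCompactSupport u) :
    Integrable (fun x => u x * v x) μ :=
  (hu.mul hv).integrable_of_hasCompactSupport hsupp.mul_right

theorem integral_mul_deriv_eq_neg_integral_deriv_mul [NormedRing R] [NormedAlgebra ℝ R]
    {u v : ℝ → R} (hu : ContDiff ℝ 1 u) (hv : ContDiff ℝ 1 v) (hsupp : HasCompactSupport u) :
    ∫ x, u x * deriv v x = -∫ x, deriv u x * v x :=
  integral_mul_deriv_eq_deriv_mul_of_integrable
    (fun x _ => (hu.differentiable one_ne_zero x).hasDerivAt)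
    (fun x _ => (hv.differentiable one_ne_zero x).hasDerivAt)
    (integrable_mul_of_hasCompactSupport_left hu.continuous hv.continuous_deriv_one hsupp)
    (integrable_mul_of_hasCompactSupport_left hu.continuous_deriv_one hv.continuous hsupp.deriv)
    (integrable_mul_of_hasCompactSupport_left hu.continuous hv.continuous hsupp)

variable [NormedCommRing R] [NormedAlgebra ℝ R]

theorem integral_pow_mul_deriv_eq_zero {φ : ℝ → R} (hφ : ContDiff ℝ 1 φ)
    (hsupp : HasCompactSupport φ) (n : ℕ) : ∫ x, φ x ^ n * deriv φ x = 0 := by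
  have hderiv (x : ℝ) : HasDerivAt (fun y => (n + 1 : ℝ)⁻¹ • φ y ^ (n + 1))
      (φ x ^ n * deriv φ x) x := by
    refine (((hφ.differentiable one_ne_zero x).hasDerivAt.fun_pow (n + 1)).const_smul
      (n + 1 : ℝ)⁻¹).congr_deriv ?_
    rw [mul_assoc, ← nsmul_eq_mul, ← Nat.cast_smul_eq_nsmul ℝ, smul_smul, Nat.cast_add_one,
      inv_mul_cancel₀ n.cast_add_one_ne_zero, one_smul, Nat.add_sub_cancel]
  refine integral_eq_zero_of_hasDerivAt_of_integrable hderiv ?_ ?_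
  · simpa only [mul_comm] using integrable_mul_of_hasCompactSupport_left
      hφ.continuous_deriv_one (hφ.continuous.fun_pow n) hsupp.deriv
  · simpa only [pow_succ'] using (integrable_mul_of_hasCompactSupport_left
      hφ.continuous (hφ.continuous.fun_pow n) hsupp).fun_smul (n + 1 : ℝ)⁻¹

theorem two_mul_integral_mul_deriv_mul {f g : ℝ → R} (hf : ContDiff ℝ 1 f)
    (hg : ContDiff ℝ 1 g) (hsupp : HasCompactSupport g) :
    2 * ∫ x, g x * deriv (fun y => f y * g y) x = ∫ x, deriv f x * g x ^ 2 := by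
  have hf' := hf.continuous_deriv_one
  have hg' := hg.continuous_deriv_one
  have by_product_rule : ∫ x, g x * deriv (fun y => f y * g y) x
      = (∫ x, deriv f x * g x ^ 2) + ∫ x, deriv g x * (f x * g x) := by
    rw [← integral_add]
    · refine integral_congr_ae (.of_forall fun x => ?_)
      dsimp only
      rw [deriv_fun_mul (hf.differentiable one_ne_zero x) (hg.differentiable one_ne_zero x)]
      ring
    · simpa only [sq, mul_left_comm] using integrable_mul_of_hasCompactSupport_left
        hg.continuous (hf'.fun_mul hg.continuous) hsupp
    · exact integrable_mul_of_hasCompactSupport_left hg' (hf.continuous.mul hg.continuous)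
        hsupp.deriv
  have by_parts := integral_mul_deriv_eq_neg_integral_deriv_mul hg (hf.mul hg) hsupp
  linear_combination by_product_rule + by_parts

end CompactSupport

/-- The Helmholtz operator `f ↦ f - β f''`, whose value at `f` is the multiplier in the energy
estimate. -/
noncomputable def helmholtz (β : ℝ) (f : ℝ → ℝ) (x : ℝ) : ℝ :=
  f x - β * deriv (deriv f) x

section Helmholtz

variable {f : ℝ → ℝ} (β : ℝ)

lemma continuous_helmholtz (hf : ContDiff ℝ 2 f) : Continuous (helmholtz β f) :=
  hf.continuous.sub (continuous_const.mul hf.deriv'.continuous_deriv_one)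

lemma hasCompactSupport_helmholtz (hsupp : HasCompactSupport f) :
    HasCompactSupport (helmholtz β f) :=
  hsupp.sub (hsupp.deriv.deriv.mul_left (f := fun _ => β))

lemma integrable_helmholtz_mul (hf : ContDiff ℝ 2 f) (hsupp : HasCompactSupport f) {v : ℝ → ℝ}
    (hv : Continuous v) : Integrable fun x => helmholtz β f x * v x :=
  integrable_mul_of_hasCompactSupport_left (continuous_helmholtz β hf) hv
    (hasCompactSupport_helmholtz β hsupp)

lemma integral_helmholtz_mul (hf : ContDiff ℝ 2 f) (hsupp : HasCompactSupport f) {v : ℝ → ℝ}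
    (hv : Continuous v) :
    ∫ x, helmholtz β f x * v x = (∫ x, f x * v x) - β * ∫ x, deriv (deriv f) x * v x := by
  rw [← integral_const_mul, ← integral_sub]
  · simp only [helmholtz, sub_mul, mul_assoc]
  · exact integrable_mul_of_hasCompactSupport_left hf.continuous hv hsupp
  · exact (integrable_mul_of_hasCompactSupport_left hf.deriv'.continuous_deriv_one hv
      hsupp.deriv.deriv).const_mul β

theorem integral_helmholtz_mul_self_mul_deriv (hf : ContDiff ℝ 2 f) (hsupp : HasCompactSupport f) :
    ∫ x, helmholtz β f x * (f x * deriv f x) = -β * ∫ x, f x * deriv f x * deriv (deriv f) x := by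
  have integral_self_mul_self_mul_deriv : ∫ x, f x * (f x * deriv f x) = 0 := by
    simpa only [sq, mul_assoc] using
      integral_pow_mul_deriv_eq_zero (hf.of_le one_le_two) hsupp 2
  have hf₁ : ContDiff ℝ 1 (deriv f) := hf.deriv'
  rw [integral_helmholtz_mul β hf hsupp (hf.continuous.fun_mul hf₁.continuous),
    integral_self_mul_self_mul_deriv]
  simp only [mul_comm (deriv (deriv f) _)]
  ring

theorem integral_helmholtz_mul_deriv_deriv (hf : ContDiff ℝ 2 f) (hsupp : HasCompactSupport f) :
    ∫ x, helmholtz β f x * deriv (deriv f) x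
      = -(∫ x, deriv f x ^ 2) - β * ∫ x, deriv (deriv f) x ^ 2 := by
  rw [integral_helmholtz_mul β hf hsupp hf.deriv'.continuous_deriv_one,
    integral_mul_deriv_eq_neg_integral_deriv_mul (hf.of_le one_le_two) hf.deriv' hsupp]
  simp only [sq]

theorem integral_helmholtz_mul_deriv_mul_deriv_deriv (hf : ContDiff ℝ 2 f)
    (hsupp : HasCompactSupport f) :
    ∫ x, helmholtz β f x * (deriv f x * deriv (deriv f) x)
      = (∫ x, f x * deriv f x * deriv (deriv f) x)
        - β * ∫ x, deriv f x * deriv (deriv f) x ^ 2 := by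
  have hf₁ : ContDiff ℝ 1 (deriv f) := hf.deriv'
  rw [integral_helmholtz_mul β hf hsupp (hf₁.continuous.fun_mul hf₁.continuous_deriv_one)]
  simp only [sq, mul_assoc, mul_left_comm (deriv (deriv f) _)]

theorem integral_helmholtz_mul_deriv_deriv_deriv (hf : ContDiff ℝ 3 f)
    (hsupp : HasCompactSupport f) :
    ∫ x, helmholtz β f x * deriv (deriv (deriv f)) x = 0 := by
  have hf₁ : ContDiff ℝ 2 (deriv f) := hf.deriv'
  have hf₂ : ContDiff ℝ 1 (deriv (deriv f)) := hf₁.deriv'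
  have integral_deriv_mul_deriv_two : ∫ x, deriv f x * deriv (deriv f) x = 0 := by
    simpa only [pow_one] using
      integral_pow_mul_deriv_eq_zero (hf₁.of_le one_le_two) hsupp.deriv 1
  have integral_deriv_two_mul_deriv_three :
      ∫ x, deriv (deriv f) x * deriv (deriv (deriv f)) x = 0 := by
    simpa only [pow_one] using integral_pow_mul_deriv_eq_zero hf₂ hsupp.deriv.deriv 1
  rw [integral_helmholtz_mul β (hf.of_le (by norm_num)) hsupp hf₂.continuous_deriv_one,
    integral_mul_deriv_eq_neg_integral_deriv_mul (hf.of_le (by norm_num)) hf₂ hsupp,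
    integral_deriv_mul_deriv_two, integral_deriv_two_mul_deriv_three, neg_zero, mul_zero, sub_zero]

theorem integral_helmholtz_mul_deriv_self_mul_deriv_deriv (hf : ContDiff ℝ 3 f)
    (hsupp : HasCompactSupport f) :
    ∫ x, helmholtz β f x * deriv (fun y => f y * deriv (deriv f) y) x
      = -(∫ x, f x * deriv f x * deriv (deriv f) x)
        - β / 2 * ∫ x, deriv f x * deriv (deriv f) x ^ 2 := by
  have hf₀ : ContDiff ℝ 1 f := hf.of_le (by norm_num)
  have hf₂ : ContDiff ℝ 1 (deriv (deriv f)) := ContDiff.deriv' (n := 1) (ContDiff.deriv' hf)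
  have hprod := hf₀.mul hf₂
  rw [integral_helmholtz_mul β (hf.of_le (by norm_num)) hsupp hprod.continuous_deriv_one,
    integral_mul_deriv_eq_neg_integral_deriv_mul hf₀ hprod hsupp,
    ← two_mul_integral_mul_deriv_mul hf₀ hf₂ hsupp.deriv.deriv]
  simp only [mul_left_comm (deriv f _), mul_assoc]
  ring

end Helmholtz

/-- The spatial part of the Kudryashov–Sinelshchikov operator,
`A f f' + β f''' - Bβ (f f'')' - Cβ f' f'' - ε f''`. -/
noncomputable def kudryashovSinelshchikov (A B C β ε : ℝ) (f : ℝ → ℝ) (x : ℝ) : ℝ :=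
  A * f x * deriv f x + β * deriv (deriv (deriv f)) x
    - B * β * deriv (fun y => f y * deriv (deriv f) y) x
    - C * β * deriv f x * deriv (deriv f) x
    - ε * deriv (deriv f) x

theorem integral_helmholtz_mul_kudryashovSinelshchikov {f : ℝ → ℝ} (hf : ContDiff ℝ 3 f)
    (hsupp : HasCompactSupport f) (A B C β ε : ℝ) :
    ∫ x, helmholtz β f x * kudryashovSinelshchikov A B C β ε f x
      = A * (∫ x, helmholtz β f x * (f x * deriv f x))
        + β * (∫ x, helmholtz β f x * deriv (deriv (deriv f)) x)
        - B * β * (∫ x, helmholtz β f x * deriv (fun y => f y * deriv (deriv f) y) x)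
        - C * β * (∫ x, helmholtz β f x * (deriv f x * deriv (deriv f) x))
        - ε * ∫ x, helmholtz β f x * deriv (deriv f) x := by
  have hf₁ : ContDiff ℝ 2 (deriv f) := hf.deriv'
  have hf₂ : ContDiff ℝ 1 (deriv (deriv f)) := hf₁.deriv'
  have integrable_const_mul_pairing {v : ℝ → ℝ} (hv : Continuous v) (c : ℝ) :
      Integrable fun x => c * (helmholtz β f x * v x) :=
    (integrable_helmholtz_mul β (hf.of_le (by norm_num)) hsupp hv).const_mul c
  have i₁ := integrable_const_mul_pairing (hf.continuous.fun_mul hf₁.continuous) A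
  have i₂ := integrable_const_mul_pairing hf₂.continuous_deriv_one β
  have i₃ := integrable_const_mul_pairing
    ((hf.of_le (by norm_num)).mul hf₂).continuous_deriv_one (B * β)
  have i₄ := integrable_const_mul_pairing (hf₁.continuous.fun_mul hf₂.continuous) (C * β)
  have i₅ := integrable_const_mul_pairing hf₂.continuous ε
  simp only [← integral_const_mul]
  rw [← integral_add' i₁ i₂, ← integral_sub' (i₁.add i₂) i₃,
    ← integral_sub' ((i₁.add i₂).sub i₃) i₄, ← integral_sub' (((i₁.add i₂).sub i₃).sub i₄) i₅]
  congr with x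
  simp only [kudryashovSinelshchikov, Pi.add_apply, Pi.sub_apply]
  ring

theorem stmt_5_general (f : ℝ → ℝ) (hf : ContDiff ℝ 3 f) (hsupp : HasCompactSupport f)
    (A B C β ε : ℝ) :
    ∫ x : ℝ, (f x - β * deriv (deriv f) x) *
      (A * f x * deriv f x + β * deriv (deriv (deriv f)) x
        - B * β * deriv (fun y => f y * deriv (deriv f) y) x
        - C * β * deriv f x * deriv (deriv f) x
        - ε * deriv (deriv f) x)
    = -β * (A - B + C) * (∫ x : ℝ, f x * deriv f x * deriv (deriv f) x)
      + (β ^ 2 / 2) * (B + 2 * C) * (∫ x : ℝ, deriv f x * (deriv (deriv f) x) ^ 2)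
      + ε * (∫ x : ℝ, (deriv f x) ^ 2)
      + β * ε * (∫ x : ℝ, (deriv (deriv f) x) ^ 2) := by
  change ∫ x, helmholtz β f x * kudryashovSinelshchikov A B C β ε f x = _
  have hf' : ContDiff ℝ 2 f := hf.of_le (by norm_num)
  rw [integral_helmholtz_mul_kudryashovSinelshchikov hf hsupp,
    integral_helmholtz_mul_self_mul_deriv β hf' hsupp,
    integral_helmholtz_mul_deriv_deriv_deriv β hf hsupp,
    integral_helmholtz_mul_deriv_self_mul_deriv_deriv β hf hsupp,
    integral_helmholtz_mul_deriv_mul_deriv_deriv β hf' hsupp,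
    integral_helmholtz_mul_deriv_deriv β hf' hsupp]
  ring

/-- The key integral identity behind the `L²` energy estimate for the
Kudryashov–Sinelshchikov equation: multiplying the spatial operator by
`f - β f''` and integrating by parts. -/
theorem stmt_5 (f : ℝ → ℝ) (hf : ContDiff ℝ (⊤ : ℕ∞) f) (hsupp : HasCompactSupport f)
    (A B C β ε : ℝ) :
    ∫ x : ℝ, (f x - β * deriv (deriv f) x) *
      (A * f x * deriv f x + β * deriv (deriv (deriv f)) x
        - B * β * deriv (fun y => f y * deriv (deriv f) y) x
        - C * β * deriv f x * deriv (deriv f) x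
        - ε * deriv (deriv f) x)
    = -β * (A - B + C) * (∫ x : ℝ, f x * deriv f x * deriv (deriv f) x)
      + (β ^ 2 / 2) * (B + 2 * C) * (∫ x : ℝ, deriv f x * (deriv (deriv f) x) ^ 2)
      + ε * (∫ x : ℝ, (deriv f x) ^ 2)
      + β * ε * (∫ x : ℝ, (deriv (deriv f) x) ^ 2) :=
  stmt_5_general f (contDiff_infty.1 hf 3) hsupp A B C β ε
end

section
/- There exists a constant M > 0, depending only on A and C₀, such that for every t ≥ 0 one has ‖u(t,·)‖⁴_{L⁴(ℝ)} ≤ M and ε²‖∂ₓu(t,·)‖²_{L²(ℝ)} ≤ M. -/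
open MeasureTheory

/-!
Two functionals control the solution. For `B = 2A/3`, `C = -A/3` the dispersive terms cancel exactly
in the derivative of the energy `∫ u² + β ∫ u_x²`, which therefore decreases and is at most `C₀`.
The functional `Λ ∫ u⁴ + ε² ∫ u_x²` with `Λ ≥ A²` decreases as long as `β ≤ ε² / 4` and
`Λ β u² ≤ ε² / 4`, since viscosity then absorbs the remaining cross terms.

If `β ≤ η ε²` with `η` small, a bound on the second functional, together with `∫ u² ≤ C₀`, bounds
`ε² u⁴` by Agmon's inequality `f⁴ ≤ ∫ f² ∫ f_x²`, hence gives back `Λ β u² ≤ ε² / 4`: the bound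
propagates in time by a continuity argument. If `β > η ε²`, the energy alone bounds
`ε² ∫ u_x²`, and `β ≤ κ ε⁴` (`κ = 1 / (√C₀ A²)`) then forces `ε` and `β` to be bounded below, so
that Agmon's inequality bounds `∫ u⁴`.
-/

open Function Set

section TimeDependent

variable {E : Type*} [NormedAddCommGroup E] [NormedSpace ℝ E] {f : ℝ → ℝ → E}

theorem deriv_snd_eq_fderiv_uncurry (hf : Differentiable ℝ (uncurry f)) (t x : ℝ) :
    deriv (f t) x = fderiv ℝ (uncurry f) (t, x) (0, 1) := by
  have hslice : HasDerivAt (fun y : ℝ => (t, y)) (0, 1) x :=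
    (hasDerivAt_const x t).prodMk (hasDerivAt_id x)
  exact ((hf (t, x)).hasFDerivAt.comp_hasDerivAt x hslice).deriv

theorem deriv_fst_eq_fderiv_uncurry (hf : Differentiable ℝ (uncurry f)) (t x : ℝ) :
    deriv (fun τ => f τ x) t = fderiv ℝ (uncurry f) (t, x) (1, 0) := by
  have hslice : HasDerivAt (fun τ : ℝ => (τ, x)) (1, 0) t :=
    (hasDerivAt_id t).prodMk (hasDerivAt_const t x)
  exact ((hf (t, x)).hasFDerivAt.comp_hasDerivAt (f := fun τ : ℝ => (τ, x)) t hslice).deriv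

theorem contDiff_uncurry_deriv_snd {m n : WithTop ℕ∞} (hf : ContDiff ℝ n (uncurry f))
    (hmn : m + 1 ≤ n) : ContDiff ℝ m (uncurry fun t => deriv (f t)) := by
  have hf₁ : Differentiable ℝ (uncurry f) := hf.differentiable (by rintro rfl; simp at hmn)
  have heq : (uncurry fun t => deriv (f t)) = fun p => fderiv ℝ (uncurry f) p (0, 1) :=
    funext fun p => deriv_snd_eq_fderiv_uncurry hf₁ p.1 p.2
  rw [heq]
  exact (hf.fderiv_right hmn).clm_apply contDiff_const

theorem contDiff_uncurry_deriv_fst {m n : WithTop ℕ∞} (hf : ContDiff ℝ n (uncurry f))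
    (hmn : m + 1 ≤ n) : ContDiff ℝ m (uncurry fun t x => deriv (fun τ => f τ x) t) := by
  have hf₁ : Differentiable ℝ (uncurry f) := hf.differentiable (by rintro rfl; simp at hmn)
  have heq : (uncurry fun t x => deriv (fun τ => f τ x) t) =
      fun p => fderiv ℝ (uncurry f) p (1, 0) :=
    funext fun p => deriv_fst_eq_fderiv_uncurry hf₁ p.1 p.2
  rw [heq]
  exact (hf.fderiv_right hmn).clm_apply contDiff_const

theorem deriv_fst_deriv_snd_comm (hf : ContDiff ℝ 2 (uncurry f)) (t x : ℝ) :
    deriv (fun τ => deriv (f τ) x) t = deriv (fun y => deriv (fun τ => f τ y) t) x := by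
  have hf₁ := hf.differentiable two_ne_zero
  have hf₂ : Differentiable ℝ (fderiv ℝ (uncurry f)) :=
    (hf.fderiv_right (m := 1) (by norm_num)).differentiable one_ne_zero
  have hsymm : IsSymmSndFDerivAt ℝ (uncurry f) (t, x) :=
    hf.contDiffAt.isSymmSndFDerivAt (by simp)
  have hf_fst : Differentiable ℝ (uncurry fun s y => deriv (fun τ => f τ y) s) :=
    (contDiff_uncurry_deriv_fst hf (m := 1) (by norm_num)).differentiable one_ne_zero
  have hf_snd : Differentiable ℝ (uncurry fun s => deriv (f s)) :=
    (contDiff_uncurry_deriv_snd hf (m := 1) (by norm_num)).differentiable one_ne_zero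
  have heq_fst : (uncurry fun s y => deriv (fun τ => f τ y) s) =
      fun p => fderiv ℝ (uncurry f) p (1, 0) :=
    funext fun p => deriv_fst_eq_fderiv_uncurry hf₁ p.1 p.2
  have heq_snd : (uncurry fun s => deriv (f s)) = fun p => fderiv ℝ (uncurry f) p (0, 1) :=
    funext fun p => deriv_snd_eq_fderiv_uncurry hf₁ p.1 p.2
  rw [deriv_fst_eq_fderiv_uncurry hf_snd, deriv_snd_eq_fderiv_uncurry hf_fst, heq_fst, heq_snd,
    fderiv_clm_apply (hf₂ _) (by fun_prop), fderiv_clm_apply (hf₂ _) (by fun_prop)]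
  simpa using hsymm (1, 0) (0, 1)

theorem hasDerivAt_integral_of_eq_zero_off_compact {X E : Type*} [TopologicalSpace X] [T2Space X]
    [MeasurableSpace X] [OpensMeasurableSpace X] {μ : Measure X} [IsFiniteMeasureOnCompacts μ]
    [NormedAddCommGroup E] [NormedSpace ℝ E] {f f' : ℝ → X → E} {K : Set X} (hK : IsCompact K)
    (hf_zero : ∀ t, ∀ x ∉ K, f t x = 0) (hf_cont : ∀ t, Continuous (f t))
    (hf : ∀ t x, HasDerivAt (fun τ => f τ x) (f' t x) t) (hf' : Continuous (uncurry f')) (t : ℝ) :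
    HasDerivAt (fun τ => ∫ x, f τ x ∂μ) (∫ x, f' t x ∂μ) t := by
  have hf'_zero : ∀ τ, ∀ x ∉ K, f' τ x = 0 := fun τ x hx => by
    rw [← (hf τ x).deriv]
    simp [hf_zero _ x hx]
  have integrable_of_zero {g : X → E} (hg : Continuous g) (hg₀ : ∀ x ∉ K, g x = 0) :
      Integrable g μ :=
    hg.integrable_of_hasCompactSupport (.intro hK hg₀)
  obtain ⟨C, hC⟩ := ((isCompact_closedBall t 1).prod hK).exists_bound_of_continuousOn
    hf'.continuousOn
  refine (hasDerivAt_integral_of_dominated_loc_of_deriv_le (bound := K.indicator fun _ => C)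
    (Metric.closedBall_mem_nhds t one_pos)
    (.of_forall fun τ => (integrable_of_zero (hf_cont τ) (hf_zero τ)).aestronglyMeasurable)
    (integrable_of_zero (hf_cont t) (hf_zero t))
    (integrable_of_zero (by fun_prop) (hf'_zero t)).aestronglyMeasurable
    (.of_forall fun x τ hτ => ?_) ?_ (.of_forall fun x τ _ => hf τ x)).2
  · by_cases hx : x ∈ K
    · rw [indicator_of_mem hx]
      exact hC (τ, x) ⟨hτ, hx⟩
    · rw [hf'_zero τ x hx]
      simp [hx]
  · exact (integrable_indicator_iff hK.measurableSet).2 (by simp [hK.measure_lt_top])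

theorem deriv_eq_zero_of_notMem_of_isClosed {E : Type*} [NormedAddCommGroup E] [NormedSpace ℝ E]
    {v : ℝ → E} {K : Set ℝ} (hK : IsClosed K) (hv : ∀ x ∉ K, v x = 0) {x : ℝ} (hx : x ∉ K) :
    deriv v x = 0 :=
  image_eq_zero_of_notMem_tsupport fun h =>
    hx (closure_minimal (support_subset_iff'.2 hv) hK (tsupport_deriv_subset h))

variable {u : ℝ → ℝ → ℝ} {K : Set ℝ}

theorem hasDerivAt_integral_pow_succ (hu : ContDiff ℝ 1 (uncurry u)) (hK : IsCompact K)
    (hu_zero : ∀ t, ∀ x ∉ K, u t x = 0) (n : ℕ) (t : ℝ) :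
    HasDerivAt (fun τ => ∫ x, u τ x ^ (n + 1))
      ((n + 1) * ∫ x, u t x ^ n * deriv (fun τ => u τ x) t) t := by
  have hu_cont : Continuous (uncurry u) := hu.continuous
  have hu'_cont : Continuous (uncurry fun t x => deriv (fun τ => u τ x) t) :=
    (contDiff_uncurry_deriv_fst hu (m := 0) (by simp)).continuous
  rw [← integral_const_mul]
  refine hasDerivAt_integral_of_eq_zero_off_compact hK
    (f' := fun t x => (n + 1) * (u t x ^ n * deriv (fun τ => u τ x) t))
    (fun τ x hx => by simp [hu_zero τ x hx]) (fun τ => by fun_prop) (fun τ x => ?_) ?_ t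
  · have : DifferentiableAt ℝ (fun τ => u τ x) τ :=
      (hu.differentiable one_ne_zero).comp (f := fun τ : ℝ => (τ, x)) (by fun_prop) τ
    simpa [mul_assoc] using this.hasDerivAt.fun_pow (n + 1)
  · simp only [uncurry_def] at *
    fun_prop

theorem hasDerivAt_integral_deriv_sq (hu : ContDiff ℝ 2 (uncurry u)) (hK : IsCompact K)
    (hu_zero : ∀ t, ∀ x ∉ K, u t x = 0) (t : ℝ) :
    HasDerivAt (fun τ => ∫ x, deriv (u τ) x ^ 2)
      (-2 * ∫ x, deriv (deriv (u t)) x * deriv (fun τ => u τ x) t) t := by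
  have hu_x : ContDiff ℝ 1 (uncurry fun t => deriv (u t)) :=
    contDiff_uncurry_deriv_snd hu (by norm_num)
  have hu_t : ContDiff ℝ 1 fun x => deriv (fun τ => u τ x) t :=
    (contDiff_uncurry_deriv_fst hu (m := 1) (by norm_num)).comp (contDiff_prodMk_right t)
  have hux : ContDiff ℝ 1 (deriv (u t)) := hu_x.comp (contDiff_prodMk_right t)
  have hux_zero (τ : ℝ) (x : ℝ) (hx : x ∉ K) : deriv (u τ) x = 0 :=
    deriv_eq_zero_of_notMem_of_isClosed hK.isClosed (hu_zero τ) hx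
  have hc : HasCompactSupport (deriv (u t)) := .intro hK (hux_zero t)
  convert hasDerivAt_integral_pow_succ hu_x hK hux_zero 1 t using 1
  simp only [pow_one, deriv_fst_deriv_snd_comm hu]
  rw [integral_mul_deriv_eq_deriv_mul_of_integrable
    (fun x _ => (hux.differentiable one_ne_zero x).hasDerivAt)
    (fun x _ => (hu_t.differentiable one_ne_zero x).hasDerivAt)]
  · push_cast
    ring
  · exact (hux.continuous.mul hu_t.continuous_deriv_one).integrable_of_hasCompactSupport
      hc.mul_right
  · exact (hux.continuous_deriv_one.mul hu_t.continuous).integrable_of_hasCompactSupport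
      hc.deriv.mul_right
  · exact (hux.continuous.mul hu_t.continuous).integrable_of_hasCompactSupport hc.mul_right

end TimeDependent

theorem le_of_hasDerivAt_nonpos_of_le {G G' : ℝ → ℝ} {a L : ℝ}
    (hG : ∀ t, a ≤ t → HasDerivAt G (G' t) t) (ha : G a < L)
    (hG' : ∀ t, a ≤ t → G t ≤ L → G' t ≤ 0) {t : ℝ} (hat : a ≤ t) : G t ≤ L := by
  -- `G` stays below a line of slope `δ > 0` from `G a` that remains under `L` up to time `t`:
  -- at a contact point `G ≤ L`, so there `G' ≤ 0 < δ`.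
  set δ := (L - G a) / (1 + (t - a)) with hδ
  have hδ₀ : 0 < δ := div_pos (by linarith) (by linarith)
  have hδ_mul : δ * (1 + (t - a)) = L - G a := by
    rw [hδ]
    exact div_mul_cancel₀ _ (by linarith)
  have barrier_le {s : ℝ} (hs : s ≤ t) : G a + δ * (s - a) ≤ L := by nlinarith
  refine (image_le_of_deriv_right_lt_deriv_boundary (B := fun s => G a + δ * (s - a))
    (B' := fun _ => δ) (fun s hs => (hG s hs.1).continuousAt.continuousWithinAt)
    (fun s hs => (hG s hs.1).hasDerivWithinAt) (by simp) (fun s => ?_)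
    (fun s hs hGs => (hG' s hs.1 (hGs.le.trans (barrier_le hs.2.le))).trans_lt hδ₀)
    (right_mem_Icc.2 hat)).trans (barrier_le le_rfl)
  simpa using (((hasDerivAt_id s).sub_const a).const_mul δ).const_add (G a)

section Agmon

theorem two_mul_norm_le_integral_norm_deriv {E : Type*} [NormedAddCommGroup E] [NormedSpace ℝ E]
    [CompleteSpace E] {f : ℝ → E} (hf : ContDiff ℝ 1 f) (hfc : HasCompactSupport f) (x : ℝ) :
    2 * ‖f x‖ ≤ ∫ y, ‖deriv f y‖ := by
  have hint : Integrable (deriv f) :=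
    hf.continuous_deriv_one.integrable_of_hasCompactSupport hfc.deriv
  calc 2 * ‖f x‖ = ‖∫ y in Iic x, deriv f y‖ + ‖∫ y in Ioi x, deriv f y‖ := by
        rw [hfc.integral_Iic_deriv_eq hf, hfc.integral_Ioi_deriv_eq hf, norm_neg, two_mul]
    _ ≤ (∫ y in Iic x, ‖deriv f y‖) + ∫ y in Ioi x, ‖deriv f y‖ :=
        add_le_add (norm_integral_le_integral_norm _) (norm_integral_le_integral_norm _)
    _ = ∫ y, ‖deriv f y‖ :=
        intervalIntegral.integral_Iic_add_Ioi hint.norm.integrableOn hint.norm.integrableOn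

theorem sq_integral_abs_mul_le {α : Type*} [MeasurableSpace α] {μ : Measure α} {f g : α → ℝ}
    (hf : MemLp f 2 μ) (hg : MemLp g 2 μ) :
    (∫ x, |f x * g x| ∂μ) ^ 2 ≤ (∫ x, f x ^ 2 ∂μ) * ∫ x, g x ^ 2 ∂μ := by
  have holder := integral_mul_norm_le_Lp_mul_Lq (μ := μ) (f := f) (g := g) .two_two
    (by simpa using hf) (by simpa using hg)
  simp only [Real.norm_eq_abs, ← abs_mul, Real.rpow_two, sq_abs, ← Real.sqrt_eq_rpow] at holder
  calc (∫ x, |f x * g x| ∂μ) ^ 2 ≤ (√(∫ x, f x ^ 2 ∂μ) * √(∫ x, g x ^ 2 ∂μ)) ^ 2 := by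
        gcongr
    _ = (∫ x, f x ^ 2 ∂μ) * ∫ x, g x ^ 2 ∂μ := by
        rw [mul_pow, Real.sq_sqrt (by positivity), Real.sq_sqrt (by positivity)]

variable {f : ℝ → ℝ}

theorem pow_four_le_integral_sq_mul_integral_deriv_sq (hf : ContDiff ℝ 1 f)
    (hfc : HasCompactSupport f) (x : ℝ) :
    f x ^ 4 ≤ (∫ y, f y ^ 2) * ∫ y, deriv f y ^ 2 := by
  have hf' := hf.continuous_deriv_one
  have hderiv (y : ℝ) : deriv (fun z => f z ^ 2) y = 2 * (f y * deriv f y) := by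
    simpa [mul_assoc] using ((hf.differentiable one_ne_zero y).hasDerivAt.fun_pow 2).deriv
  have hsq : f x ^ 2 ≤ ∫ y, |f y * deriv f y| := by
    have h := two_mul_norm_le_integral_norm_deriv (hf.pow 2)
      (hfc.comp_left (g := (· ^ 2)) (by simp)) x
    simp only [Real.norm_eq_abs, hderiv, abs_mul (2 : ℝ), abs_two, integral_const_mul, abs_sq] at h
    linarith
  calc f x ^ 4 = (f x ^ 2) ^ 2 := by ring
    _ ≤ (∫ y, |f y * deriv f y|) ^ 2 := by gcongr
    _ ≤ _ := sq_integral_abs_mul_le (hf.continuous.memLp_of_hasCompactSupport hfc)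
        (hf'.memLp_of_hasCompactSupport hfc.deriv)

theorem integral_pow_four_le_sqrt (hf : ContDiff ℝ 1 f) (hfc : HasCompactSupport f) :
    ∫ x, f x ^ 4 ≤ √((∫ x, f x ^ 2) * ∫ x, deriv f x ^ 2) * ∫ x, f x ^ 2 := by
  rw [← integral_const_mul]
  have hint {n : ℕ} (hn : n ≠ 0) : Integrable (fun x => f x ^ n) :=
    (hf.continuous.pow n).integrable_of_hasCompactSupport
      (hfc.comp_left (g := (· ^ n)) (zero_pow hn))
  refine integral_mono (hint four_ne_zero) ((hint two_ne_zero).const_mul _) fun x => ?_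
  have hx : f x ^ 2 ≤ √((∫ x, f x ^ 2) * ∫ x, deriv f x ^ 2) :=
    Real.le_sqrt_of_sq_le (by
      simpa [← pow_mul] using pow_four_le_integral_sq_mul_integral_deriv_sq hf hfc x)
  calc f x ^ 4 = f x ^ 2 * f x ^ 2 := by ring
    _ ≤ _ := by gcongr

variable {ε β κ η C₀ : ℝ}

theorem mul_sq_le_of_integral_sq_le {Λ L : ℝ} (hf : ContDiff ℝ 1 f) (hfc : HasCompactSupport f)
    (hε : 0 < ε) (hβ : 0 ≤ β) (hβκ : β ≤ κ * ε ^ 4) (hβη : β ≤ η * ε ^ 2)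
    (hS : ∫ x, f x ^ 2 ≤ C₀) (hD : ε ^ 2 * ∫ x, deriv f x ^ 2 ≤ L)
    (hκη : 16 * Λ ^ 2 * κ * η * C₀ * L ≤ 1) (x : ℝ) :
    Λ * β * f x ^ 2 ≤ ε ^ 2 / 4 := by
  have agmon : ε ^ 2 * f x ^ 4 ≤ C₀ * L := by
    calc ε ^ 2 * f x ^ 4 ≤ ε ^ 2 * ((∫ y, f y ^ 2) * ∫ y, deriv f y ^ 2) := by
          gcongr
          exact pow_four_le_integral_sq_mul_integral_deriv_sq hf hfc x
      _ = (∫ y, f y ^ 2) * (ε ^ 2 * ∫ y, deriv f y ^ 2) := by ring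
      _ ≤ C₀ * L := mul_le_mul hS hD (by positivity) (le_trans (by positivity) hS)
  have hκ : 0 ≤ κ := nonneg_of_mul_nonneg_left (hβ.trans hβκ) (by positivity)
  have hη : 0 ≤ η := nonneg_of_mul_nonneg_left (hβ.trans hβη) (by positivity)
  refine abs_le_of_sq_le_sq' ?_ (by positivity) |>.2
  calc (Λ * β * f x ^ 2) ^ 2 = Λ ^ 2 * (β * β) * f x ^ 4 := by ring
    _ ≤ Λ ^ 2 * (κ * ε ^ 4 * (η * ε ^ 2)) * f x ^ 4 := by gcongr
    _ = Λ ^ 2 * κ * η * ε ^ 4 * (ε ^ 2 * f x ^ 4) := by ring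
    _ ≤ Λ ^ 2 * κ * η * ε ^ 4 * (C₀ * L) := by gcongr
    _ = (16 * Λ ^ 2 * κ * η * C₀ * L) * (ε ^ 2 / 4) ^ 2 := by ring
    _ ≤ (ε ^ 2 / 4) ^ 2 := mul_le_of_le_one_left (by positivity) hκη

theorem sq_mul_integral_deriv_sq_le_of_energy_le (hη : 0 < η) (hηβ : η * ε ^ 2 ≤ β)
    (henergy : (∫ x, f x ^ 2) + β * (∫ x, deriv f x ^ 2) ≤ C₀) :
    ε ^ 2 * (∫ x, deriv f x ^ 2) ≤ C₀ / η := by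
  have hS : 0 ≤ ∫ x, f x ^ 2 := by positivity
  rw [le_div_iff₀ hη]
  calc ε ^ 2 * (∫ x, deriv f x ^ 2) * η = η * ε ^ 2 * ∫ x, deriv f x ^ 2 := by ring
    _ ≤ β * ∫ x, deriv f x ^ 2 := by gcongr
    _ ≤ C₀ := by linarith

theorem integral_pow_four_le_of_energy_le (hf : ContDiff ℝ 1 f) (hfc : HasCompactSupport f)
    (hε : 0 < ε) (hη : 0 < η) (hηβ : η * ε ^ 2 ≤ β) (hβκ : β ≤ κ * ε ^ 4)
    (henergy : (∫ x, f x ^ 2) + β * (∫ x, deriv f x ^ 2) ≤ C₀) :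
    ∫ x, f x ^ 4 ≤ √κ * C₀ ^ 2 / η := by
  have hβ : 0 < β := lt_of_lt_of_le (by positivity) hηβ
  have hS : ∫ x, f x ^ 2 ≤ C₀ := by
    have : 0 ≤ β * ∫ x, deriv f x ^ 2 := by positivity
    linarith
  have hC₀ : 0 ≤ C₀ := le_trans (by positivity) hS
  have hηκ : η ≤ κ * ε ^ 2 :=
    le_of_mul_le_mul_right (by linarith) (by positivity : 0 < ε ^ 2)
  have hκ : 0 ≤ κ := (pos_of_mul_pos_left (hη.trans_le hηκ) (by positivity)).le
  have hD : ∫ x, deriv f x ^ 2 ≤ κ * C₀ / η ^ 2 := by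
    rw [le_div_iff₀ (by positivity)]
    calc (∫ x, deriv f x ^ 2) * η ^ 2 = η * (η * ∫ x, deriv f x ^ 2) := by ring
      _ ≤ η * (κ * ε ^ 2 * ∫ x, deriv f x ^ 2) := by gcongr
      _ = κ * (ε ^ 2 * (∫ x, deriv f x ^ 2) * η) := by ring
      _ ≤ κ * C₀ := by
        gcongr
        exact (le_div_iff₀ hη).1 (sq_mul_integral_deriv_sq_le_of_energy_le hη hηβ henergy)
  have hsqrt : √((∫ x, f x ^ 2) * ∫ x, deriv f x ^ 2) ≤ √κ * C₀ / η := by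
    refine Real.sqrt_le_iff.2 ⟨by positivity, ?_⟩
    calc (∫ x, f x ^ 2) * ∫ x, deriv f x ^ 2 ≤ C₀ * (κ * C₀ / η ^ 2) := by gcongr
      _ = (√κ * C₀ / η) ^ 2 := by
        rw [div_pow, mul_pow, Real.sq_sqrt hκ]
        ring
  calc ∫ x, f x ^ 4 ≤ √((∫ x, f x ^ 2) * ∫ x, deriv f x ^ 2) * ∫ x, f x ^ 2 :=
        integral_pow_four_le_sqrt hf hfc
    _ ≤ √κ * C₀ / η * C₀ := by gcongr
    _ = √κ * C₀ ^ 2 / η := by ring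

end Agmon

theorem integral_eq_of_hasDerivAt_sub {E : Type*} [NormedAddCommGroup E] [NormedSpace ℝ E]
    {Φ P S : ℝ → E} (hΦ : ContDiff ℝ 1 Φ) (hΦc : HasCompactSupport Φ) (hS : Integrable S)
    (hderiv : ∀ x, HasDerivAt Φ (P x - S x) x) : ∫ x, P x = ∫ x, S x := by
  have hΦ' : Integrable (deriv Φ) :=
    hΦ.continuous_deriv_one.integrable_of_hasCompactSupport hΦc.deriv
  have hP : P = deriv Φ + S := funext fun x => by simp [(hderiv x).deriv]
  rw [hP, integral_add' hΦ' hS, integral_eq_zero_of_hasDerivAt_of_integrable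
    (fun x => (hderiv x).differentiableAt.hasDerivAt) hΦ'
    (hΦ.continuous.integrable_of_hasCompactSupport hΦc), zero_add]

theorem hasCompactSupport_of_deriv_deriv_eq_zero {E F : Type*} [NormedAddCommGroup E]
    [NormedSpace ℝ E] [Zero F] {v : ℝ → E} {g : ℝ → F} (hv : HasCompactSupport v)
    (hg : ∀ x, v x = 0 → deriv v x = 0 → deriv (deriv v) x = 0 → g x = 0) :
    HasCompactSupport g := by
  have hv₀ : ∀ x ∉ tsupport v, v x = 0 := fun x => image_eq_zero_of_notMem_tsupport
  have hv₁ : ∀ x ∉ tsupport v, deriv v x = 0 :=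
    fun x => deriv_eq_zero_of_notMem_of_isClosed (isClosed_tsupport v) hv₀
  exact .intro hv fun x hx => hg x (hv₀ x hx) (hv₁ x hx)
    (deriv_eq_zero_of_notMem_of_isClosed (isClosed_tsupport v) hv₁ hx)

/-- The spatial part of the Kudryashov–Sinelshchikov equation with `B = 2A/3`, `C = -A/3`, `D = 0`:
the equation reads `∂ₜu = ksVectorField A ε β u`. -/
noncomputable def ksVectorField (A ε β : ℝ) (v : ℝ → ℝ) (x : ℝ) : ℝ :=
  -(A * v x * deriv v x) - β * deriv (deriv (deriv v)) x
    + (2 * A / 3) * β * deriv (fun y => v y * deriv (deriv v) y) x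
    - A / 3 * β * deriv v x * deriv (deriv v) x + ε * deriv (deriv v) x

section VectorField

variable {A ε β : ℝ} {v : ℝ → ℝ}

theorem ksVectorField_eq (hv : ContDiff ℝ 3 v) (x : ℝ) :
    ksVectorField A ε β v x =
      -(A * v x * deriv v x) - β * deriv (deriv (deriv v)) x
        + A / 3 * β * (deriv v x * deriv (deriv v) x + 2 * v x * deriv (deriv (deriv v)) x)
        + ε * deriv (deriv v) x := by
  have hv₂ : ContDiff ℝ 1 (deriv (deriv v)) := hv.deriv'.deriv'
  rw [ksVectorField, deriv_fun_mul (hv.differentiable three_ne_zero x)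
    (hv₂.differentiable one_ne_zero x)]
  ring

theorem integral_mul_ksVectorField (hv : ContDiff ℝ 3 v) (hvc : HasCompactSupport v) :
    ∫ x, v x * ksVectorField A ε β v x =
      ∫ x, (-(A * β * v x * deriv v x * deriv (deriv v) x) - ε * deriv v x ^ 2) := by
  have hv₀ : ContDiff ℝ 1 v := hv.of_le (by norm_num)
  have hv₁ : ContDiff ℝ 1 (deriv v) := (hv.deriv' (n := 2)).of_le (by norm_num)
  have hv₂ : ContDiff ℝ 1 (deriv (deriv v)) := hv.deriv'.deriv'
  -- In these three identities `Φ` collects the boundary terms of integrating by parts until only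
  -- squares and products of `v' v''` with powers of `v` are left.
  refine integral_eq_of_hasDerivAt_sub
    (Φ := fun x => -(A / 3) * v x ^ 3 - β * (v x * deriv (deriv v) x) + β / 2 * deriv v x ^ 2
      + 2 * A / 3 * β * (v x ^ 2 * deriv (deriv v) x) + ε * (v x * deriv v x))
    (by fun_prop)
    (hasCompactSupport_of_deriv_deriv_eq_zero hvc fun x h₀ h₁ _ => by simp [h₀, h₁])
    (Continuous.integrable_of_hasCompactSupport (by fun_prop)
      (hasCompactSupport_of_deriv_deriv_eq_zero hvc fun x h₀ h₁ _ => by simp [h₀, h₁]))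
    fun x => ?_
  have d₀ := (hv₀.differentiable one_ne_zero x).hasDerivAt
  have d₁ := (hv₁.differentiable one_ne_zero x).hasDerivAt
  have d₂ := (hv₂.differentiable one_ne_zero x).hasDerivAt
  refine ((((((d₀.fun_pow 3).const_mul _).fun_sub ((d₀.fun_mul d₂).const_mul _)).fun_add
    ((d₁.fun_pow 2).const_mul _)).fun_add (((d₀.fun_pow 2).fun_mul d₂).const_mul _)).fun_add
    ((d₀.fun_mul d₁).const_mul _)).congr_deriv ?_
  rw [ksVectorField_eq hv]
  norm_num
  ring

theorem integral_deriv_deriv_mul_ksVectorField (hv : ContDiff ℝ 3 v) (hvc : HasCompactSupport v) :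
    ∫ x, deriv (deriv v) x * ksVectorField A ε β v x =
      ∫ x, (-(A * v x * deriv v x * deriv (deriv v) x) + ε * deriv (deriv v) x ^ 2) := by
  have hv₀ : ContDiff ℝ 1 v := hv.of_le (by norm_num)
  have hv₁ : ContDiff ℝ 1 (deriv v) := (hv.deriv' (n := 2)).of_le (by norm_num)
  have hv₂ : ContDiff ℝ 1 (deriv (deriv v)) := hv.deriv'.deriv'
  refine integral_eq_of_hasDerivAt_sub
    (Φ := fun x => -(β / 2) * deriv (deriv v) x ^ 2 + A / 3 * β * (v x * deriv (deriv v) x ^ 2))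
    (by fun_prop)
    (hasCompactSupport_of_deriv_deriv_eq_zero hvc fun x _ _ h₂ => by simp [h₂])
    (Continuous.integrable_of_hasCompactSupport (by fun_prop)
      (hasCompactSupport_of_deriv_deriv_eq_zero hvc fun x _ _ h₂ => by simp [h₂]))
    fun x => ?_
  have d₀ := (hv₀.differentiable one_ne_zero x).hasDerivAt
  have d₂ := (hv₂.differentiable one_ne_zero x).hasDerivAt
  refine (((d₂.fun_pow 2).const_mul _).fun_add
    ((d₀.fun_mul (d₂.fun_pow 2)).const_mul _)).congr_deriv ?_
  rw [ksVectorField_eq hv]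
  norm_num
  ring

theorem integral_pow_three_mul_ksVectorField (hv : ContDiff ℝ 3 v) (hvc : HasCompactSupport v) :
    ∫ x, v x ^ 3 * ksVectorField A ε β v x =
      ∫ x, ((3 * β * v x ^ 2 - 7 * A / 3 * β * v x ^ 3) * deriv v x * deriv (deriv v) x
        - 3 * ε * (v x * deriv v x) ^ 2) := by
  have hv₀ : ContDiff ℝ 1 v := hv.of_le (by norm_num)
  have hv₁ : ContDiff ℝ 1 (deriv v) := (hv.deriv' (n := 2)).of_le (by norm_num)
  have hv₂ : ContDiff ℝ 1 (deriv (deriv v)) := hv.deriv'.deriv'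
  refine integral_eq_of_hasDerivAt_sub
    (Φ := fun x => -(A / 5) * v x ^ 5 - β * (v x ^ 3 * deriv (deriv v) x)
      + 2 * A / 3 * β * (v x ^ 4 * deriv (deriv v) x) + ε * (v x ^ 3 * deriv v x))
    (by fun_prop)
    (hasCompactSupport_of_deriv_deriv_eq_zero hvc fun x h₀ _ _ => by simp [h₀])
    (Continuous.integrable_of_hasCompactSupport (by fun_prop)
      (hasCompactSupport_of_deriv_deriv_eq_zero hvc fun x h₀ _ _ => by simp [h₀]))
    fun x => ?_
  have d₀ := (hv₀.differentiable one_ne_zero x).hasDerivAt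
  have d₁ := (hv₁.differentiable one_ne_zero x).hasDerivAt
  have d₂ := (hv₂.differentiable one_ne_zero x).hasDerivAt
  refine (((((d₀.fun_pow 5).const_mul _).fun_sub (((d₀.fun_pow 3).fun_mul d₂).const_mul _)).fun_add
    (((d₀.fun_pow 4).fun_mul d₂).const_mul _)).fun_add
    (((d₀.fun_pow 3).fun_mul d₁).const_mul _)).congr_deriv ?_
  rw [ksVectorField_eq hv]
  norm_num
  ring

theorem energy_variation_nonpos (hε : 0 ≤ ε) (hβ : 0 ≤ β) (hv : ContDiff ℝ 3 v)
    (hvc : HasCompactSupport v) :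
    2 * (∫ x, v x * ksVectorField A ε β v x)
      - 2 * β * ∫ x, deriv (deriv v) x * ksVectorField A ε β v x ≤ 0 := by
  have hv₁ : Continuous (deriv v) := (hv.deriv' (n := 2)).continuous
  have hv₂ : Continuous (deriv (deriv v)) := hv.deriv'.deriv' (n := 1) |>.continuous
  rw [integral_mul_ksVectorField hv hvc, integral_deriv_deriv_mul_ksVectorField hv hvc,
    ← integral_const_mul, ← integral_const_mul, ← integral_sub]
  · refine integral_nonpos fun x => ?_
    have : 0 ≤ 2 * ε * deriv v x ^ 2 + 2 * β * ε * deriv (deriv v) x ^ 2 := by positivity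
    simp only [Pi.zero_apply]
    linarith
  all_goals
    exact Continuous.integrable_of_hasCompactSupport (by fun_prop)
      (hasCompactSupport_of_deriv_deriv_eq_zero hvc fun x _ h₁ h₂ => by simp [h₁, h₂])

theorem quartic_dissipation_nonneg {Λ a b c : ℝ} (hε : 0 < ε) (hβ : 0 ≤ β) (hΛ : 0 < Λ)
    (hA : A ^ 2 ≤ Λ) (hβε : β ≤ ε ^ 2 / 4) (ha : Λ * β * a ^ 2 ≤ ε ^ 2 / 4) :
    0 ≤ 12 * Λ * ε * b ^ 2 + 2 * ε ^ 3 * c ^ 2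
      - (12 * Λ * β * a - 28 / 3 * A * Λ * β * a ^ 2 + 2 * A * ε ^ 2) * b * c := by
  -- The expression is a quadratic form in `(b, c)`, so its discriminant must be nonpositive.
  set q := 12 * Λ * β * a - 28 / 3 * A * Λ * β * a ^ 2 + 2 * A * ε ^ 2 with hq
  have sq_first : (12 * Λ * β * a) ^ 2 ≤ 9 * (Λ * ε ^ 4) := by
    calc (12 * Λ * β * a) ^ 2 = 144 * Λ * (β * (Λ * β * a ^ 2)) := by ring
      _ ≤ 144 * Λ * (ε ^ 2 / 4 * (ε ^ 2 / 4)) := by gcongr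
      _ = 9 * (Λ * ε ^ 4) := by ring
  have sq_second : (28 / 3 * A * Λ * β * a ^ 2) ^ 2 ≤ 49 / 9 * (Λ * ε ^ 4) := by
    calc (28 / 3 * A * Λ * β * a ^ 2) ^ 2 = 784 / 9 * A ^ 2 * (Λ * β * a ^ 2) ^ 2 := by ring
      _ ≤ 784 / 9 * Λ * (ε ^ 2 / 4) ^ 2 := by gcongr
      _ = 49 / 9 * (Λ * ε ^ 4) := by ring
  have sq_third : (2 * A * ε ^ 2) ^ 2 ≤ 4 * (Λ * ε ^ 4) := by
    calc (2 * A * ε ^ 2) ^ 2 = 4 * ε ^ 4 * A ^ 2 := by ring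
      _ ≤ 4 * ε ^ 4 * Λ := by gcongr
      _ = 4 * (Λ * ε ^ 4) := by ring
  have discriminant : q ^ 2 ≤ 96 * (Λ * ε ^ 4) := by
    have : 0 ≤ Λ * ε ^ 4 := by positivity
    -- `(r - s + t)² ≤ 3 (r² + s² + t²)`, and `3 (9 + 49 / 9 + 4) ≤ 96`
    rw [hq]
    nlinarith [sq_nonneg (12 * Λ * β * a + 28 / 3 * A * Λ * β * a ^ 2),
      sq_nonneg (12 * Λ * β * a - 2 * A * ε ^ 2),
      sq_nonneg (28 / 3 * A * Λ * β * a ^ 2 + 2 * A * ε ^ 2)]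
  refine nonneg_of_mul_nonneg_right (a := 8 * ε ^ 3) ?_ (by positivity)
  calc 0 ≤ (4 * ε ^ 3 * c - q * b) ^ 2 + (96 * (Λ * ε ^ 4) - q ^ 2) * b ^ 2 := by
        have := sub_nonneg.2 discriminant
        positivity
    _ = _ := by ring

theorem quartic_variation_nonpos {Λ : ℝ} (hε : 0 < ε) (hβ : 0 ≤ β) (hΛ : 0 < Λ)
    (hA : A ^ 2 ≤ Λ) (hβε : β ≤ ε ^ 2 / 4) (hv : ContDiff ℝ 3 v) (hvc : HasCompactSupport v)
    (hsmall : ∀ x, Λ * β * v x ^ 2 ≤ ε ^ 2 / 4) :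
    4 * Λ * (∫ x, v x ^ 3 * ksVectorField A ε β v x)
      - 2 * ε ^ 2 * ∫ x, deriv (deriv v) x * ksVectorField A ε β v x ≤ 0 := by
  have hv₁ : Continuous (deriv v) := (hv.deriv' (n := 2)).continuous
  have hv₂ : Continuous (deriv (deriv v)) := hv.deriv'.deriv' (n := 1) |>.continuous
  rw [integral_pow_three_mul_ksVectorField hv hvc, integral_deriv_deriv_mul_ksVectorField hv hvc,
    ← integral_const_mul, ← integral_const_mul, ← integral_sub]
  · refine integral_nonpos fun x => ?_
    have := quartic_dissipation_nonneg hε hβ hΛ hA hβε (hsmall x) (b := v x * deriv v x)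
      (c := deriv (deriv v) x)
    simp only [Pi.zero_apply]
    linarith
  all_goals
    exact Continuous.integrable_of_hasCompactSupport (by fun_prop)
      (hasCompactSupport_of_deriv_deriv_eq_zero hvc fun x _ h₁ h₂ => by simp [h₁, h₂])

end VectorField

/-- Classical solutions on `[0, ∞) × ℝ` of the Kudryashov–Sinelshchikov equation with `B = 2A/3`,
`C = -A/3`, `D = 0`, supported in a spatial compact set that does not depend on time. Regularity and
support are required for all `t : ℝ`, the equation for `t ≥ 0` only. -/
structure IsKSSolution (A ε β : ℝ) (u : ℝ → ℝ → ℝ) : Prop where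
  contDiff : ContDiff ℝ 3 (uncurry u)
  exists_isCompact : ∃ K : Set ℝ, IsCompact K ∧ ∀ t, ∀ x ∉ K, u t x = 0
  deriv_eq : ∀ t, 0 ≤ t → ∀ x, deriv (fun τ => u τ x) t = ksVectorField A ε β (u t) x

namespace IsKSSolution

variable {A ε β C₀ : ℝ} {u : ℝ → ℝ → ℝ}

theorem of_residual_eq_zero (hu : ContDiff ℝ 3 (uncurry u)) {R : ℝ}
    (hR : ∀ t x, R ≤ |x| → u t x = 0)
    (hpde : ∀ t, 0 ≤ t → ∀ x, deriv (fun τ => u τ x) t + A * u t x * deriv (u t) x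
      + β * deriv (deriv (deriv (u t))) x
      - (2 * A / 3) * β * deriv (fun y => u t y * deriv (deriv (u t)) y) x
      - (-(A / 3)) * β * deriv (u t) x * deriv (deriv (u t)) x - ε * deriv (deriv (u t)) x = 0) :
    IsKSSolution A ε β u where
  contDiff := hu
  exists_isCompact := ⟨Icc (-R) R, isCompact_Icc, fun t x hx =>
    hR t x (le_of_not_ge fun h => hx (abs_le.1 h))⟩
  deriv_eq t ht x := by
    rw [ksVectorField]
    linear_combination hpde t ht x

theorem contDiff_slice (hu : IsKSSolution A ε β u) (t : ℝ) : ContDiff ℝ 3 (u t) :=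
  hu.contDiff.comp (contDiff_prodMk_right t)

theorem hasCompactSupport (hu : IsKSSolution A ε β u) (t : ℝ) : HasCompactSupport (u t) :=
  let ⟨_, hK, hu_zero⟩ := hu.exists_isCompact
  .intro hK (hu_zero t)

theorem hasDerivAt_integral_pow_succ (hu : IsKSSolution A ε β u) (n : ℕ) {t : ℝ} (ht : 0 ≤ t) :
    HasDerivAt (fun τ => ∫ x, u τ x ^ (n + 1))
      ((n + 1) * ∫ x, u t x ^ n * ksVectorField A ε β (u t) x) t := by
  obtain ⟨K, hK, hu_zero⟩ := hu.exists_isCompact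
  simpa only [hu.deriv_eq t ht] using
    _root_.hasDerivAt_integral_pow_succ (hu.contDiff.of_le (by norm_num)) hK hu_zero n t

theorem hasDerivAt_integral_deriv_sq (hu : IsKSSolution A ε β u) {t : ℝ} (ht : 0 ≤ t) :
    HasDerivAt (fun τ => ∫ x, deriv (u τ) x ^ 2)
      (-2 * ∫ x, deriv (deriv (u t)) x * ksVectorField A ε β (u t) x) t := by
  obtain ⟨K, hK, hu_zero⟩ := hu.exists_isCompact
  simpa only [hu.deriv_eq t ht] using
    _root_.hasDerivAt_integral_deriv_sq (hu.contDiff.of_le (by norm_num)) hK hu_zero t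

theorem energy_antitoneOn (hu : IsKSSolution A ε β u) (hε : 0 ≤ ε) (hβ : 0 ≤ β) :
    AntitoneOn (fun t => (∫ x, u t x ^ 2) + β * ∫ x, deriv (u t) x ^ 2) (Ici 0) := by
  have energy_hasDerivAt {t : ℝ} (ht : 0 ≤ t) :=
    (hu.hasDerivAt_integral_pow_succ 1 ht).add ((hu.hasDerivAt_integral_deriv_sq ht).const_mul β)
  refine antitoneOn_of_hasDerivWithinAt_nonpos (convex_Ici 0)
    (fun t ht => (energy_hasDerivAt ht).continuousAt.continuousWithinAt)
    (fun t ht => (energy_hasDerivAt (interior_subset ht)).hasDerivWithinAt) fun t _ => ?_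
  have := energy_variation_nonpos (A := A) hε hβ (hu.contDiff_slice t) (hu.hasCompactSupport t)
  simp only [pow_one, Nat.cast_one]
  linarith

theorem quartic_energy_le {Λ L : ℝ} (hu : IsKSSolution A ε β u) (hε : 0 < ε) (hβ : 0 ≤ β)
    (hΛ : 0 < Λ) (hA : A ^ 2 ≤ Λ) (hβε : β ≤ ε ^ 2 / 4)
    (h₀ : Λ * (∫ x, u 0 x ^ 4) + ε ^ 2 * (∫ x, deriv (u 0) x ^ 2) < L)
    (hsmall : ∀ t, 0 ≤ t → Λ * (∫ x, u t x ^ 4) + ε ^ 2 * (∫ x, deriv (u t) x ^ 2) ≤ L →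
      ∀ x, Λ * β * u t x ^ 2 ≤ ε ^ 2 / 4) {t : ℝ} (ht : 0 ≤ t) :
    Λ * (∫ x, u t x ^ 4) + ε ^ 2 * (∫ x, deriv (u t) x ^ 2) ≤ L := by
  refine le_of_hasDerivAt_nonpos_of_le
    (G := fun t => Λ * (∫ x, u t x ^ 4) + ε ^ 2 * (∫ x, deriv (u t) x ^ 2))
    (fun s hs => ((hu.hasDerivAt_integral_pow_succ 3 hs).const_mul Λ).add
      ((hu.hasDerivAt_integral_deriv_sq hs).const_mul (ε ^ 2)))
    h₀ (fun s hs hsL => ?_) ht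
  have := quartic_variation_nonpos hε hβ hΛ hA hβε (hu.contDiff_slice s)
    (hu.hasCompactSupport s) (hsmall s hs hsL)
  push_cast
  linarith

theorem energy_le (hu : IsKSSolution A ε β u) (hε : 0 ≤ ε) (hβ : 0 ≤ β)
    (h₀ : (∫ x, u 0 x ^ 2) + (∫ x, u 0 x ^ 4) + (β + ε ^ 2) * (∫ x, deriv (u 0) x ^ 2) ≤ C₀)
    {t : ℝ} (ht : 0 ≤ t) : (∫ x, u t x ^ 2) + β * (∫ x, deriv (u t) x ^ 2) ≤ C₀ := by
  have initial_quartic_nonneg : 0 ≤ ∫ x, u 0 x ^ 4 := by positivity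
  have initial_deriv_nonneg : 0 ≤ ε ^ 2 * ∫ x, deriv (u 0) x ^ 2 := by positivity
  have := hu.energy_antitoneOn hε hβ self_mem_Ici ht ht
  linarith

theorem quartic_energy_le_of_le_mul_sq {Λ κ η : ℝ} (hu : IsKSSolution A ε β u) (hε : 0 < ε)
    (hβ : 0 ≤ β) (hΛ : 1 ≤ Λ) (hA : A ^ 2 ≤ Λ) (hC₀ : 0 < C₀) (hη : η ≤ 1 / 4)
    (hκη : 32 * Λ ^ 3 * κ * η * C₀ ^ 2 ≤ 1)
    (h₀ : (∫ x, u 0 x ^ 2) + (∫ x, u 0 x ^ 4) + (β + ε ^ 2) * (∫ x, deriv (u 0) x ^ 2) ≤ C₀)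
    (hβκ : β ≤ κ * ε ^ 4) (hβη : β ≤ η * ε ^ 2) {t : ℝ} (ht : 0 ≤ t) :
    Λ * (∫ x, u t x ^ 4) + ε ^ 2 * (∫ x, deriv (u t) x ^ 2) ≤ 2 * Λ * C₀ := by
  have hΛ₀ : 0 < Λ := by linarith
  have initial_lt :
      Λ * (∫ x, u 0 x ^ 4) + ε ^ 2 * (∫ x, deriv (u 0) x ^ 2) < 2 * Λ * C₀ := by
    have hS : 0 ≤ ∫ x, u 0 x ^ 2 := by positivity
    have hβD : 0 ≤ β * ∫ x, deriv (u 0) x ^ 2 := by positivity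
    have hεD : 0 ≤ ε ^ 2 * ∫ x, deriv (u 0) x ^ 2 := by positivity
    calc Λ * (∫ x, u 0 x ^ 4) + ε ^ 2 * (∫ x, deriv (u 0) x ^ 2)
        ≤ Λ * ((∫ x, u 0 x ^ 4) + ε ^ 2 * (∫ x, deriv (u 0) x ^ 2)) := by nlinarith
      _ ≤ Λ * C₀ := by
        gcongr
        linarith
      _ < 2 * Λ * C₀ := by nlinarith
  refine hu.quartic_energy_le hε hβ hΛ₀ hA (by nlinarith) initial_lt (fun s hs hsL => ?_) ht
  have hS : ∫ x, u s x ^ 2 ≤ C₀ := by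
    have : 0 ≤ β * ∫ x, deriv (u s) x ^ 2 := by positivity
    linarith [hu.energy_le hε.le hβ h₀ hs]
  have hD : ε ^ 2 * ∫ x, deriv (u s) x ^ 2 ≤ 2 * Λ * C₀ := by
    have : 0 ≤ Λ * ∫ x, u s x ^ 4 := by positivity
    linarith
  exact mul_sq_le_of_integral_sq_le ((hu.contDiff_slice s).of_le (by norm_num))
    (hu.hasCompactSupport s) hε hβ hβκ hβη hS hD (by linarith)

end IsKSSolution

theorem stmt_8_general (A κ C₀ : ℝ) (hκ : 0 ≤ κ) (hC₀ : 0 < C₀) :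
    ∃ M : ℝ, 0 < M ∧ ∀ (ε β : ℝ) (u : ℝ → ℝ → ℝ), 0 < ε → 0 ≤ β → IsKSSolution A ε β u →
      ((∫ x, u 0 x ^ 2) + (∫ x, u 0 x ^ 4) + (β + ε ^ 2) * (∫ x, deriv (u 0) x ^ 2) ≤ C₀) →
      β ≤ κ * ε ^ 4 → ∀ t, 0 ≤ t →
        (∫ x, u t x ^ 4) ≤ M ∧ ε ^ 2 * (∫ x, deriv (u t) x ^ 2) ≤ M := by
  obtain ⟨Λ, hΛ, hA⟩ : ∃ Λ, 1 ≤ Λ ∧ A ^ 2 ≤ Λ :=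
    ⟨A ^ 2 + 1, by linarith [sq_nonneg A], by linarith⟩
  set η := 1 / (4 + 32 * Λ ^ 3 * κ * C₀ ^ 2)
  have hη₀ : 0 < η := by positivity
  refine ⟨2 * Λ * C₀ + C₀ / η + √κ * C₀ ^ 2 / η, by positivity,
    fun ε β u hε hβ hu h₀ hβκ t ht => ?_⟩
  have hΛC₀ : 0 ≤ 2 * Λ * C₀ := by positivity
  have hC₀η : 0 ≤ C₀ / η := by positivity
  have hκη₀ : 0 ≤ √κ * C₀ ^ 2 / η := by positivity
  obtain hβη | hβη := le_total β (η * ε ^ 2)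
  · have hη₁ : η ≤ 1 / 4 :=
      one_div_le_one_div_of_le (by norm_num) (le_add_of_nonneg_right (by positivity))
    have hκη : 32 * Λ ^ 3 * κ * η * C₀ ^ 2 ≤ 1 := by
      have : η * (4 + 32 * Λ ^ 3 * κ * C₀ ^ 2) = 1 := one_div_mul_cancel (by positivity)
      linarith
    have hQ := hu.quartic_energy_le_of_le_mul_sq hε hβ hΛ hA hC₀ hη₁ hκη h₀ hβκ hβη ht
    have hF : 0 ≤ ∫ x, u t x ^ 4 := by positivity
    have hD : 0 ≤ ε ^ 2 * ∫ x, deriv (u t) x ^ 2 := by positivity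
    constructor <;> nlinarith
  · have henergy := hu.energy_le hε.le hβ h₀ ht
    have hF := integral_pow_four_le_of_energy_le ((hu.contDiff_slice t).of_le (by norm_num))
      (hu.hasCompactSupport t) hε hη₀ hβη hβκ henergy
    have hD := sq_mul_integral_deriv_sq_le_of_energy_le hη₀ hβη henergy
    constructor <;> linarith

/-- Uniform bounds: the family `u` is bounded in `L^∞(L⁴)` and `ε ∂ₓ u` in `L^∞(L²)`. -/
theorem stmt_8 (A C₀ : ℝ) (hA : A ≠ 0) (hC₀pos : 0 < C₀) :
    ∃ M : ℝ, 0 < M ∧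
      ∀ (ε β : ℝ) (u : ℝ → ℝ → ℝ),
        0 < ε → 0 < β →
        ContDiff ℝ (⊤ : ℕ∞) (Function.uncurry u) →
        (∃ R > (0:ℝ), ∀ t x : ℝ, R ≤ |x| → u t x = 0) →
        (∀ t : ℝ, 0 ≤ t → ∀ x : ℝ,
          deriv (fun τ => u τ x) t
            + A * u t x * deriv (u t) x
            + β * deriv (deriv (deriv (u t))) x
            - (2 * A / 3) * β * deriv (fun y => u t y * deriv (deriv (u t)) y) x
            - (-(A / 3)) * β * deriv (u t) x * deriv (deriv (u t)) x
            - ε * deriv (deriv (u t)) x = 0) →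
        ((∫ x : ℝ, (u 0 x) ^ 2) + (∫ x : ℝ, (u 0 x) ^ 4)
            + (β + ε ^ 2) * (∫ x : ℝ, (deriv (u 0) x) ^ 2) ≤ C₀) →
        β ≤ ε ^ 4 / (Real.sqrt C₀ * A ^ 2) →
        ∀ t : ℝ, 0 ≤ t →
          (∫ x : ℝ, (u t x) ^ 4) ≤ M ∧
          ε ^ 2 * (∫ x : ℝ, (deriv (u t) x) ^ 2) ≤ M := by
  obtain ⟨M, hM, hbound⟩ := stmt_8_general A (1 / (√C₀ * A ^ 2)) C₀ (by positivity) hC₀pos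
  exact ⟨M, hM, fun ε β u hε hβ hu ⟨R, _, hR⟩ hpde h₀ hβε => hbound ε β u hε hβ.le
    (.of_residual_eq_zero (contDiff_infty.1 hu 3) hR hpde) h₀
    (by rwa [one_div_mul_eq_div])⟩
end
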